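/- arXiv:1905.08470 — 2 statements merged into one kernel-verified Lean document; each statement's English description precedes it below -/
import Mathlib

section
/- In the Wilson–Xiang setting, assume |A| = |B| = (q+1)/2 and |A_e| + |B_o| = |A_o| + |B_e| − 2(−1)^{(q−1)/2}. Then E_0 = D_0 ∪ D_2 ∪ D_3 is a set of type Q in F_{q²} × F_{q²}. -/
noncomputable section

def zetaP (p : ℕ) : ℂ := Complex.exp (2 * Real.pi * Complex.I / p)

/-- The canonical additive character `ψ(x) = ζ_p^{Tr_{L/F_p}(x)}`. -/
def psiL (p : ℕ) (L : Type) [Field L] [Fintype L] [CharP L p] (x : L) : ℂ :=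
  letI : Algebra (ZMod p) L := ZMod.algebra L p
  zetaP p ^ (Algebra.trace (ZMod p) L x).val

/-- `ψ_{a,b}(E) = Σ_{(x,y)∈E} ψ(ax+by)`. -/
def psiSum (p : ℕ) (L : Type) [Field L] [Fintype L] [CharP L p]
    (a b : L) (E : Set (L × L)) : ℂ :=
  ∑ᶠ z ∈ E, psiL p L (a * z.1 + b * z.2)

/-- a subset of `F_{q²} × F_{q²}` of type Q. -/
def IsTypeQ (p q : ℕ) (L : Type) [Field L] [Fintype L] [CharP L p]
    (E : Set (L × L)) : Prop :=
  E.ncard = (q ^ 4 - 1) / 4 ∧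
    ∀ a b : L, (a, b) ≠ ((0 : L), (0 : L)) →
      psiSum p L a b E = ((q : ℂ) ^ 2 - 1) / 4 ∨
      psiSum p L a b E = (-3 * (q : ℂ) ^ 2 - 1) / 4

/-- the cyclotomic class `C_i^{(N,q²)} = ω^i⟨ω^N⟩`. -/
def cyc (L : Type) [Field L] (ω : L) (N i : ℕ) : Set L :=
  {x | ∃ k : ℕ, x = ω ^ i * (ω ^ N) ^ k}

/-- ω is a primitive element (generator of the multiplicative group). -/
def IsPrim (L : Type) [Field L] (ω : L) : Prop :=
  ∀ x : L, x ≠ 0 → ∃ n : ℕ, x = ω ^ n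

/-- nonzero squares of `K` -/
def sqSet (K : Type) [Field K] : Set K := {y | ∃ z : K, z ≠ 0 ∧ y = z ^ 2}

/-!
Let `T` be the trace of `L / K`, let `η` denote the quadratic characters and put `g = ω ^ c`, a
nonsquare of `L`. At most two indices lie in exactly one of `A` and `B`, and the parity condition
forces the side of each. Hence, for `u ≠ 0`, whether `(u, v)` lies in `E₀` depends only on `η u`,
`η (T (u v))` and `η (T (g u v))`. Expanding the indicator function of `E₀` in characters gives
`(1 + η (T (u v))) (1 + η (T (g u v)))` plus corrections supported on the lines `T (u v) = 0`,
`T (g u v) = 0` and on the axes.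

Up to constants, the Fourier transforms at `(a, b)` of `η (T (u v))`, `η (T (g u v))` and their
product are `η (T (a b))`, `η (T (a b / g))` and the product of these. The corrections on the lines
lead to the sums of `η u` over the solutions of `T (a u + m / u) = 0`, which can be evaluated
explicitly. In the total, four times the transform of the indicator function of `E₀`, the character
values combine to `q² - 1` or `-3 q² - 1`.
-/

namespace WilsonXiang

/-- The quadratic character of a finite field, with values in `ℂ` and the value `0` at `0`. -/
def quadChar (F : Type*) [Field F] [Fintype F] : MulChar F ℂ :=
  open Classical in (quadraticChar F).ringHomComp (Int.castRingHom ℂ)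

local notation "η" => quadChar

/-- The indicator function of `0`. It detects zero traces and the coordinate axes. -/
def indZero {M : Type*} [Zero M] (x : M) : ℂ :=
  open Classical in if x = 0 then 1 else 0

section IndZero

@[simp] lemma indZero_zero {M : Type*} [Zero M] : indZero (0 : M) = 1 := if_pos rfl

lemma indZero_of_ne {M : Type*} [Zero M] {x : M} (hx : x ≠ 0) : indZero x = 0 := if_neg hx

lemma indZero_congr {M N : Type*} [Zero M] [Zero N] {x : M} {y : N} (h : x = 0 ↔ y = 0) :
    indZero x = indZero y :=
  open Classical in if_congr h rfl rfl

lemma indZero_neg {M : Type*} [SubtractionMonoid M] (x : M) : indZero (-x) = indZero x :=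
  indZero_congr neg_eq_zero

lemma indZero_mul_left {M : Type*} [MulZeroClass M] [NoZeroDivisors M] {a : M} (ha : a ≠ 0)
    (x : M) : indZero (a * x) = indZero x :=
  indZero_congr (by simp [ha])

lemma sum_indZero_mul {M : Type*} [Fintype M] [Zero M] (f : M → ℂ) :
    ∑ x, indZero x * f x = f 0 := by
  classical
  rw [Finset.sum_eq_single 0 (fun x _ hx ↦ by rw [indZero_of_ne hx, zero_mul]) (by simp)]
  simp

lemma sum_indZero (M : Type*) [Fintype M] [Zero M] : ∑ x : M, indZero x = 1 := by
  simpa using sum_indZero_mul fun _ : M ↦ 1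

lemma sum_indZero_sub_mul {M : Type*} [Fintype M] [AddGroup M] (c : M) (f : M → ℂ) :
    ∑ x, indZero (x - c) * f x = f c := by
  rw [← Equiv.sum_comp (Equiv.addRight c)]
  simp [sum_indZero_mul]

lemma sum_indZero_add_mul {M : Type*} [Fintype M] [AddGroup M] (c : M) (f : M → ℂ) :
    ∑ x, indZero (x + c) * f x = f (-c) := by
  simpa using sum_indZero_sub_mul (-c) f

end IndZero

/-! ### Sums of the quadratic character -/

section QuadChar

variable {F : Type*} [Field F] [Fintype F]

lemma quadChar_apply [DecidableEq F] (a : F) : η F a = (quadraticChar F a : ℤ) := by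
  simp only [quadChar, MulChar.ringHomComp_apply, eq_intCast]
  congr!

@[simp] lemma quadChar_zero : η F 0 = 0 := MulChar.map_zero _

lemma quadChar_eq_one_or_neg_one {a : F} (ha : a ≠ 0) : η F a = 1 ∨ η F a = -1 := by
  classical
  rcases quadraticChar_dichotomy ha with h | h <;> simp [quadChar_apply, h]

lemma isQuadratic_quadChar : (η F).IsQuadratic := fun a ↦ by
  rcases eq_or_ne a 0 with rfl | ha
  · exact .inl quadChar_zero
  · exact .inr (quadChar_eq_one_or_neg_one ha)

lemma quadChar_mul_self (a : F) : η F a * η F a = 1 - indZero a := by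
  rcases eq_or_ne a 0 with rfl | ha
  · simp
  · rcases quadChar_eq_one_or_neg_one ha with h | h <;> simp [h, indZero_of_ne ha]

lemma quadChar_mul_self_of_ne {a : F} (ha : a ≠ 0) : η F a * η F a = 1 := by
  rw [quadChar_mul_self, indZero_of_ne ha, sub_zero]

lemma quadChar_inv (a : F) : η F a⁻¹ = η F a := by
  rw [← MulChar.inv_apply', isQuadratic_quadChar.inv]

lemma quadChar_div (a b : F) : η F (a / b) = η F a * η F b := by
  rw [div_eq_mul_inv, map_mul, quadChar_inv]

lemma quadChar_eq_one_iff {a : F} : η F a = 1 ↔ a ≠ 0 ∧ IsSquare a := by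
  classical
  rcases eq_or_ne a 0 with rfl | ha
  · simp
  · simp only [quadChar_apply, ← quadraticChar_one_iff_isSquare ha, ne_eq, ha, not_false_eq_true,
      true_and]
    norm_cast

lemma quadChar_eq_neg_one_iff {a : F} : η F a = -1 ↔ ¬IsSquare a := by
  classical
  rw [quadChar_apply, ← quadraticChar_neg_one_iff_not_isSquare]
  norm_cast

lemma indZero_quadChar_cases (a : F) :
    indZero a = 1 ∧ η F a = 0 ∨ indZero a = 0 ∧ (η F a = 1 ∨ η F a = -1) := by
  rcases eq_or_ne a 0 with rfl | ha
  · simp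
  · exact .inr ⟨indZero_of_ne ha, quadChar_eq_one_or_neg_one ha⟩

lemma ne_zero_of_quadChar_eq_neg_one_pow {a : F} {n : ℕ} (ha : η F a = (-1) ^ n) : a ≠ 0 := by
  rintro rfl
  exact pow_ne_zero n (neg_ne_zero.mpr (one_ne_zero (α := ℂ))) (by simpa using ha.symm)

lemma ne_zero_of_quadChar_eq_neg_one {a : F} (ha : η F a = -1) : a ≠ 0 :=
  ne_zero_of_quadChar_eq_neg_one_pow (n := 1) (by rw [ha, pow_one])

variable (h2 : ringChar F ≠ 2)
include h2

lemma exists_quadChar_eq_neg_one : ∃ a : F, η F a = -1 := by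
  classical
  obtain ⟨a, ha⟩ := quadraticChar_exists_neg_one h2
  exact ⟨a, by simp [quadChar_apply, ha]⟩

lemma quadChar_ne_one : η F ≠ 1 := by
  intro h
  obtain ⟨a, ha⟩ := exists_quadChar_eq_neg_one h2
  have ha0 := ne_zero_of_quadChar_eq_neg_one ha
  rw [h, MulChar.one_apply ha0.isUnit] at ha
  norm_num at ha

lemma sum_quadChar : ∑ a, η F a = 0 := MulChar.sum_eq_zero_of_ne_one (quadChar_ne_one h2)

lemma sum_comp_sq (f : F → ℂ) : ∑ x, f (x ^ 2) = ∑ k, (1 + η F k) * f k := by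
  classical
  have card_sqrts (k : F) : 1 + η F k = ∑ x : F, if x ^ 2 = k then 1 else 0 := by
    have h := congrArg (Int.cast : ℤ → ℂ) (quadraticChar_card_sqrts h2 k)
    rw [Int.cast_add, ← quadChar_apply, Int.cast_one, add_comm] at h
    simp [← h]
  simp_rw [card_sqrts, Finset.sum_mul]
  rw [Finset.sum_comm]
  simp

lemma sum_comp_mul_sq {κ : F} (hκ : κ ≠ 0) (f : F → ℂ) :
    ∑ x, f (κ * x ^ 2) = ∑ k, (1 + η F κ * η F k) * f k := by
  rw [sum_comp_sq h2 (fun t ↦ f (κ * t))]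
  refine Fintype.sum_equiv (Equiv.mulLeft₀ κ hκ) _ _ fun x ↦ ?_
  change _ = (1 + η F κ * η F (κ * x)) * f (κ * x)
  rw [map_mul, ← mul_assoc (η F κ), quadChar_mul_self_of_ne hκ, one_mul]

lemma sum_quadChar_mul_indZero (s t : F) :
    ∑ r, η F r * indZero (r * s + t) = η F (-(s * t)) := by
  rcases eq_or_ne s 0 with rfl | hs
  · simp [← Finset.sum_mul, sum_quadChar h2]
  · have key (r : F) : indZero (r * s + t) = indZero (r + t / s) := by
      rw [← indZero_mul_left hs (r + t / s)]
      congr 1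
      field_simp
    simp_rw [key]
    simp_rw [mul_comm (η F _), sum_indZero_add_mul]
    rw [← neg_div, quadChar_div, ← map_mul, neg_mul, mul_comm]

lemma sum_quadChar_mul_addChar (χ : AddChar F ℂ) (t : F) :
    ∑ s, η F s * χ (s * t) = η F t * gaussSum (η F) χ := by
  rcases eq_or_ne t 0 with rfl | ht
  · simp [sum_quadChar h2]
  · rw [← gaussSum_mulShift _ _ (Units.mk0 t ht), ← mul_assoc, Units.val_mk0,
      quadChar_mul_self_of_ne ht, one_mul]
    simp only [gaussSum, AddChar.mulShift_apply, mul_comm t]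

lemma sum_indZero_sq_sub_mul_add (t m : F) :
    ∑ u, indZero (u ^ 2 - t * u + m) = 1 + η F (t ^ 2 - 4 * m) := by
  have hF : (2 : F) ≠ 0 := Ring.two_ne_zero h2
  have hF4 : (4 : F) ≠ 0 := by simpa [← two_mul, show (4 : F) = 2 * 2 by norm_num] using hF
  calc ∑ u, indZero (u ^ 2 - t * u + m)
      = ∑ u, indZero ((2 * u - t) ^ 2 - (t ^ 2 - 4 * m)) := by
        refine Finset.sum_congr rfl fun u _ ↦ ?_
        rw [← indZero_mul_left hF4]
        congr 1
        ring
    _ = ∑ u, indZero (u ^ 2 - (t ^ 2 - 4 * m)) :=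
        Fintype.sum_equiv ((Equiv.mulLeft₀ 2 hF).trans (Equiv.subRight t)) _ _ fun _ ↦ rfl
    _ = 1 + η F (t ^ 2 - 4 * m) := by
        rw [sum_comp_sq h2 (fun k ↦ indZero (k - _))]
        simp_rw [mul_comm (1 + η F _), sum_indZero_sub_mul]

/-- On the roots of `u² - t u + n²` one has `u (t + 2 n) = (u + n)²`. -/
lemma sum_quadChar_mul_indZero_sq_sub_mul_add_sq {n : F} (hn : n ≠ 0) (t : F) :
    ∑ u, η F u * indZero (u ^ 2 - t * u + n ^ 2) = η F (t + 2 * n) + η F (t - 2 * n) := by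
  have hF : (2 : F) ≠ 0 := Ring.two_ne_zero h2
  rcases eq_or_ne (t + 2 * n) 0 with ht | ht
  · obtain rfl : t = -(2 * n) := eq_neg_of_add_eq_zero_left ht
    have double_root (u : F) : indZero (u ^ 2 - -(2 * n) * u + n ^ 2) = indZero (u + n) := by
      rw [show u ^ 2 - -(2 * n) * u + n ^ 2 = (u + n) ^ 2 by ring]
      exact indZero_congr (by simp)
    have hsq : η F (-(2 * n) - 2 * n) = η F (-n) := by
      rw [show -(2 * n) - 2 * n = 2 * 2 * -n by ring, map_mul, map_mul,
        quadChar_mul_self_of_ne hF, one_mul]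
    simp_rw [double_root, ht, hsq, mul_comm (η F _), sum_indZero_add_mul]
    simp
  · have on_roots (u : F) : η F u * indZero (u ^ 2 - t * u + n ^ 2) =
        η F (t + 2 * n) * indZero (u ^ 2 - t * u + n ^ 2) := by
      rcases eq_or_ne (u ^ 2 - t * u + n ^ 2) 0 with hu | hu
      · have hsq : u * (t + 2 * n) = (u + n) * (u + n) := by linear_combination -hu
        have hun : u + n ≠ 0 := fun h ↦ by
          have : u = 0 := by simpa [h, ht] using hsq
          exact hn (by simpa [this] using h)
        have := congrArg (η F) hsq
        rw [map_mul, map_mul, quadChar_mul_self_of_ne hun] at this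
        linear_combination (indZero (u ^ 2 - t * u + n ^ 2) * η F (t + 2 * n)) * this -
          η F u * indZero (u ^ 2 - t * u + n ^ 2) * quadChar_mul_self_of_ne ht
      · simp [indZero_of_ne hu]
    simp_rw [on_roots, ← Finset.mul_sum]
    rw [sum_indZero_sq_sub_mul_add h2, show t ^ 2 - 4 * n ^ 2 = (t + 2 * n) * (t - 2 * n) by ring,
      map_mul]
    linear_combination η F (t - 2 * n) * quadChar_mul_self_of_ne ht

lemma sum_quadChar_mul_comp_add_sq_div {n : F} (hn : n ≠ 0) (f : F → ℂ) :
    ∑ u, η F u * f (u + n ^ 2 / u) = ∑ t, (η F (t + 2 * n) + η F (t - 2 * n)) * f t := by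
  simp_rw [← sum_quadChar_mul_indZero_sq_sub_mul_add_sq h2 hn, Finset.sum_mul]
  rw [Finset.sum_comm]
  refine Finset.sum_congr rfl fun u _ ↦ ?_
  rcases eq_or_ne u 0 with rfl | hu
  · simp
  have root_iff (t : F) : indZero (u ^ 2 - t * u + n ^ 2) = indZero (t - (u + n ^ 2 / u)) := by
    rw [← indZero_neg, ← indZero_mul_left hu (t - _)]
    congr 1
    field_simp
    ring
  simp_rw [root_iff, mul_assoc, ← Finset.mul_sum, sum_indZero_sub_mul]

omit h2 in
/-- The involution `u ↦ m / u` flips the sign of every term. -/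
lemma sum_quadChar_mul_comp_add_div_eq_zero {m : F} (hm : η F m = -1) (f : F → ℂ) :
    ∑ u, η F u * f (u + m / u) = 0 := by
  have hm0 := ne_zero_of_quadChar_eq_neg_one hm
  have inv : Function.Involutive fun u : F ↦ m / u := fun u ↦ by
    simp [div_div_cancel₀ hm0]
  have flip : ∑ u, η F u * f (u + m / u) = -∑ u, η F u * f (u + m / u) := by
    rw [← Finset.sum_neg_distrib]
    refine Fintype.sum_equiv inv.toPerm _ _ fun u ↦ ?_
    simp [quadChar_div, hm, div_div_cancel₀ hm0, add_comm]
  exact self_eq_neg.mp flip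

end QuadChar

/-! ### Trace and norm in quadratic extensions -/

section QuadraticExtension

variable {K L : Type*} [Field K] [Field L] [Algebra K L]

local notation "T" => Algebra.trace K L
local notation "N" => Algebra.norm K
local notation "ι" => algebraMap K L

lemma trace_algebraMap_mul (k : K) (z : L) : T (ι k * z) = k * T z := by
  rw [← Algebra.smul_def, map_smul, smul_eq_mul]

variable [Algebra.IsQuadraticExtension K L]

lemma trace_algebraMap_eq_two_mul (k : K) : T (ι k) = 2 * k := by
  rw [Algebra.trace_algebraMap, Algebra.IsQuadraticExtension.finrank_eq_two K L, nsmul_eq_mul,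
    Nat.cast_two]

lemma sq_sub_trace_mul_add_norm (z : L) : z ^ 2 - ι (T z) * z + ι (N z) = 0 := by
  have b := Module.finBasisOfFinrankEq K L (Algebra.IsQuadraticExtension.finrank_eq_two K L)
  apply Algebra.leftMulMatrix_injective b
  have := Matrix.aeval_self_charpoly (Algebra.leftMulMatrix b z)
  rw [Matrix.charpoly_fin_two, ← Algebra.trace_eq_matrix_trace,
    ← Algebra.norm_eq_matrix_det] at this
  simpa [Algebra.algebraMap_eq_smul_one, AlgHom.commutes] using this

lemma norm_mul_trace_div {y : L} (hy : y ≠ 0) (h : L) :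
    N y * T (h / y) = T y * T h - T (h * y) := by
  rw [← trace_algebraMap_mul, ← trace_algebraMap_mul, ← map_sub]
  congr 1
  field_simp
  linear_combination h * sq_sub_trace_mul_add_norm (K := K) y

lemma sq_eq_neg_norm_of_trace_eq_zero {δ : L} (hT : T δ = 0) : δ ^ 2 = ι (-N δ) := by
  rw [map_neg]
  simpa [hT, ← eq_neg_iff_add_eq_zero] using sq_sub_trace_mul_add_norm (K := K) δ

variable (K L) in
lemma exists_ne_zero_trace_eq_zero : ∃ δ : L, δ ≠ 0 ∧ T δ = 0 := by
  have : LinearMap.ker T ≠ ⊥ := LinearMap.ker_ne_bot_of_finrank_lt (by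
    simp [Algebra.IsQuadraticExtension.finrank_eq_two K L])
  obtain ⟨δ, hT, hδ⟩ := Submodule.exists_mem_ne_zero_of_ne_bot this
  exact ⟨δ, hδ, hT⟩

variable [Algebra.IsSeparable K L]

lemma exists_eq_algebraMap_mul {δ z : L} (hδ : δ ≠ 0) (hT : T δ = 0) (hz : T z = 0) :
    ∃ k : K, z = ι k * δ := by
  have rank_ker : Module.finrank K (LinearMap.ker T) = 1 := by
    have := LinearMap.finrank_range_add_finrank_ker T
    rw [LinearMap.range_eq_top.mpr (Algebra.trace_surjective K L), finrank_top,
      Module.finrank_self, Algebra.IsQuadraticExtension.finrank_eq_two K L] at this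
    lia
  obtain ⟨k, hk⟩ := (finrank_eq_one_iff_of_nonzero' (⟨δ, hT⟩ : LinearMap.ker T)
    (by simpa [Subtype.ext_iff] using hδ)).mp rank_ker ⟨z, hz⟩
  exact ⟨k, by rw [← Algebra.smul_def]; exact (congrArg Subtype.val hk).symm⟩

lemma trace_mul_ne_zero {g δ : L} (hg : g ∉ Set.range ι) (hδ : δ ≠ 0) (hT : T δ = 0) :
    T (g * δ) ≠ 0 := by
  intro h
  obtain ⟨k, hk⟩ := exists_eq_algebraMap_mul hδ hT h
  exact hg ⟨k, (mul_right_cancel₀ hδ hk).symm⟩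

lemma sum_indZero_trace_mul [Fintype K] [Fintype L] {δ : L} (hδ : δ ≠ 0) (hT : T δ = 0)
    (f : L → ℂ) : ∑ z, indZero (T z) * f z = ∑ k : K, f (ι k * δ) := by
  symm
  refine Fintype.sum_of_injective (fun k ↦ ι k * δ)
    ((mul_left_injective₀ hδ).comp (algebraMap K L).injective) _ _ (fun z hz ↦ ?_) fun k ↦ ?_
  · rw [indZero_of_ne, zero_mul]
    intro h
    obtain ⟨k, rfl⟩ := exists_eq_algebraMap_mul hδ hT h
    exact hz ⟨k, rfl⟩
  · rw [trace_algebraMap_mul, hT, mul_zero, indZero_zero, one_mul]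

end QuadraticExtension

section FiniteQuadraticExtension

variable {K L : Type*} [Field K] [Fintype K] [Field L] [Fintype L] [Algebra K L]

local notation "T" => Algebra.trace K L
local notation "N" => Algebra.norm K
local notation "ι" => algebraMap K L
local notation "q" => (Fintype.card K : ℂ)

variable (h2 : ringChar K ≠ 2)
include h2

variable (L) in
omit [Fintype K] [Fintype L] in
lemma ringChar_ne_two_of_algebra : ringChar L ≠ 2 := by
  rwa [← Algebra.ringChar_eq K L]

/-- Both sides are computed by Euler's criterion. -/
lemma quadChar_norm (z : L) : η K (N z) = η L z := by
  classical
  have hL := ringChar_ne_two_of_algebra L h2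
  have exponent : (Nat.card L - 1) / (Nat.card K - 1) * (Fintype.card K / 2) =
      Fintype.card L / 2 := by
    have hdvd := Nat.sub_one_dvd_pow_sub_one (Fintype.card K) (Module.finrank K L)
    rw [← Module.card_eq_pow_finrank] at hdvd
    have hK := FiniteField.odd_card_of_char_ne_two h2
    have hL := FiniteField.odd_card_of_char_ne_two hL
    obtain ⟨m, hm⟩ := hdvd
    have hK1 : 1 < Fintype.card K := Fintype.one_lt_card
    rw [← Fintype.card_eq_nat_card, ← Fintype.card_eq_nat_card, hm,
      Nat.mul_div_cancel_left _ (by lia)]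
    obtain ⟨a, ha⟩ := Nat.odd_iff.mpr hK
    have : Fintype.card L = 2 * (a * m) + 1 := by
      have : 1 < Fintype.card L := Fintype.one_lt_card
      rw [← mul_assoc, ← Nat.sub_eq_of_eq_add ha, ← hm]
      lia
    rw [show Fintype.card K / 2 = a by lia, show Fintype.card L / 2 = a * m by lia, mul_comm]
  have euler := quadraticChar_eq_pow_of_char_ne_two' h2 (N z)
  have euler_L := quadraticChar_eq_pow_of_char_ne_two' hL z
  have h := congrArg ι euler
  rw [map_pow, FiniteField.algebraMap_norm_eq_pow, ← pow_mul, exponent, ← euler_L,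
    map_intCast] at h
  rw [quadChar_apply, quadChar_apply, (quadraticChar_isQuadratic K).eq_of_eq_coe
    (quadraticChar_isQuadratic L) hL h]

variable [Algebra.IsQuadraticExtension K L]

omit [Fintype K] in
lemma quadChar_algebraMap {k : K} (hk : k ≠ 0) : η L (ι k) = 1 := by
  have := Fintype.ofInjective ι (algebraMap K L).injective
  rw [← quadChar_norm h2, Algebra.norm_algebraMap,
    Algebra.IsQuadraticExtension.finrank_eq_two K L, sq, map_mul, quadChar_mul_self_of_ne hk]

omit [Fintype K] in
lemma notMem_range_algebraMap {g : L} (hg : η L g = -1) : g ∉ Set.range ι := by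
  rintro ⟨k, rfl⟩
  have hk : k ≠ 0 := by
    rintro rfl
    simp at hg
  norm_num [quadChar_algebraMap h2 hk] at hg

omit [Fintype L] in
lemma quadChar_neg_norm_of_trace_eq_zero {δ : L} (hδ : δ ≠ 0) (hT : T δ = 0) :
    η K (-N δ) = -1 := by
  rw [quadChar_eq_neg_one_iff]
  rintro ⟨k, hk⟩
  have h := sq_eq_neg_norm_of_trace_eq_zero hT
  obtain ⟨k', rfl⟩ : δ ∈ Set.range ι := by
    rw [hk, map_mul, ← sq] at h
    rcases sq_eq_sq_iff_eq_or_eq_neg.mp h with h | h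
    · exact ⟨k, h.symm⟩
    · exact ⟨-k, by rw [map_neg, h]⟩
  rw [trace_algebraMap_eq_two_mul] at hT
  have hk' := (mul_eq_zero.mp hT).resolve_left (Ring.two_ne_zero h2)
  simp [hk'] at hδ

lemma quadChar_of_trace_eq_zero {δ : L} (hδ : δ ≠ 0) (hT : T δ = 0) :
    η L δ = -η K (-1) := by
  have h := quadChar_neg_norm_of_trace_eq_zero h2 hδ hT
  rw [← quadChar_norm h2, ← neg_neg (N δ), neg_eq_neg_one_mul, map_mul, h, mul_neg_one]

lemma sum_quadChar_mul_indZero_trace :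
    ∑ z, η L z * indZero (T z) = -η K (-1) * (q - 1) := by
  classical
  obtain ⟨δ, hδ, hT⟩ := exists_ne_zero_trace_eq_zero K L
  have term (k : K) : η L (ι k * δ) = (1 - indZero k) * -η K (-1) := by
    rcases eq_or_ne k 0 with rfl | hk
    · simp
    · rw [map_mul, quadChar_algebraMap h2 hk, quadChar_of_trace_eq_zero h2 hδ hT,
        indZero_of_ne hk, sub_zero]
  simp_rw [mul_comm (η L _), sum_indZero_trace_mul hδ hT, term, ← Finset.sum_mul,
    Finset.sum_sub_distrib, sum_indZero]
  simp [mul_comm]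

/-- Averaging over the scalings `z ↦ k z`, `k ∈ K`, which preserve `η L`, reduces everything
to the trace-zero line. -/
lemma sum_quadChar_mul_comp_trace (f : K → ℂ) :
    ∑ z, η L z * f (T z) = -η K (-1) * (q * f 0 - ∑ c, f c) := by
  classical
  have hq : q - 1 ≠ 0 := sub_ne_zero.mpr (mod_cast Fintype.one_lt_card.ne')
  have scaled (k : K) : ∑ z, η L z * f (k * T z) =
      (1 - indZero k) * ∑ z, η L z * f (T z) := by
    rcases eq_or_ne k 0 with rfl | hk
    · simp [← Finset.sum_mul, sum_quadChar (ringChar_ne_two_of_algebra L h2)]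
    · rw [indZero_of_ne hk, sub_zero, one_mul]
      refine Fintype.sum_equiv (Equiv.mulLeft₀ (ι k) (by simpa)) _ _ fun z ↦ ?_
      change _ = η L (ι k * z) * f (T (ι k * z))
      rw [map_mul, quadChar_algebraMap h2 hk, one_mul, trace_algebraMap_mul]
  have averaged (t : K) : ∑ k, f (k * t) = ∑ c, f c + indZero t * (q * f 0 - ∑ c, f c) := by
    rcases eq_or_ne t 0 with rfl | ht
    · simp
    · rw [indZero_of_ne ht, zero_mul, add_zero]
      exact Equiv.sum_comp (Equiv.mulRight₀ t ht) f
  apply mul_left_cancel₀ hq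
  calc (q - 1) * ∑ z, η L z * f (T z)
      = ∑ k : K, (1 - indZero k) * ∑ z, η L z * f (T z) := by
        rw [← Finset.sum_mul, Finset.sum_sub_distrib, sum_indZero]
        simp
    _ = ∑ z, η L z * ∑ k, f (k * T z) := by
        simp_rw [← scaled, Finset.mul_sum]
        rw [Finset.sum_comm]
    _ = (∑ z, η L z * indZero (T z)) * (q * f 0 - ∑ c, f c) := by
        simp_rw [averaged, mul_add, Finset.sum_add_distrib, ← Finset.sum_mul,
          sum_quadChar (ringChar_ne_two_of_algebra L h2), ← mul_assoc, ← Finset.sum_mul]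
        simp
    _ = (q - 1) * (-η K (-1) * (q * f 0 - ∑ c, f c)) := by
        rw [sum_quadChar_mul_indZero_trace h2]
        ring

lemma sum_quadChar_add_mul_indZero_trace (c : L) :
    ∑ z, η L (z + c) * indZero (T z) = -η K (-1) * (q * indZero (T c) - 1) := by
  have sum_fiber : ∑ t : K, indZero (t - T c) = 1 := by
    simpa using sum_indZero_sub_mul (T c) fun _ ↦ 1
  rw [← Equiv.sum_comp (Equiv.subRight c)]
  simp only [Equiv.subRight_apply, sub_add_cancel, map_sub,
    sum_quadChar_mul_comp_trace h2 (fun t ↦ indZero (t - T c)), zero_sub, indZero_neg, sum_fiber]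

end FiniteQuadraticExtension

/-! ### Weighted solution counts of trace equations -/

section TwistedCount

variable {K L : Type*} [Field K] [Fintype K] [Field L] [Fintype L] [Algebra K L]

local notation "T" => Algebra.trace K L
local notation "ι" => algebraMap K L
local notation "q" => (Fintype.card K : ℂ)

variable (K) in
/-- The number of solutions `u` of `T (a u + m / u) = 0`, weighted by the quadratic character:
a finite-field analogue of a Salié sum. -/
def twistedCount (a m : L) : ℂ := ∑ u, η L u * indZero (T (a * u + m / u))

omit [Fintype K] in
lemma twistedCount_comm (a m : L) : twistedCount K a m = twistedCount K m a := by
  refine Fintype.sum_equiv (Equiv.inv L) _ _ fun u ↦ ?_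
  simp only [Equiv.inv_apply, quadChar_inv, div_eq_mul_inv, inv_inv, add_comm]

omit [Fintype K] in
lemma twistedCount_eq_mul {a : L} (ha : a ≠ 0) (m : L) :
    twistedCount K a m = η L a * twistedCount K 1 (a * m) := by
  rw [twistedCount, twistedCount, Finset.mul_sum]
  refine Fintype.sum_equiv (Equiv.mulLeft₀ a ha) _ _ fun u ↦ ?_
  change _ = η L a * (η L (a * u) * indZero (T (1 * (a * u) + a * m / (a * u))))
  rw [mul_div_mul_left _ _ ha, map_mul, ← mul_assoc, ← mul_assoc, quadChar_mul_self_of_ne ha,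
    one_mul, one_mul]

variable [Algebra.IsQuadraticExtension K L] (h2 : ringChar K ≠ 2)
include h2

lemma twistedCount_zero_right (a : L) :
    twistedCount K a 0 = -η K (-1) * (q - 1) * η L a := by
  rcases eq_or_ne a 0 with rfl | ha
  · simp [twistedCount, sum_quadChar (ringChar_ne_two_of_algebra L h2)]
  · rw [twistedCount_eq_mul ha, twistedCount]
    simp [sum_quadChar_mul_indZero_trace h2, mul_comm (η L a)]

lemma twistedCount_one_sq {n : L} (hn : n ≠ 0) :
    twistedCount K 1 (n ^ 2) = -2 * η K (-1) * (q * indZero (T n) - 1) := by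
  have h2K : (2 : K) ≠ 0 := Ring.two_ne_zero h2
  have double (n : L) : indZero (T (2 * n)) = indZero (T n) := by
    rw [← map_ofNat ι 2, trace_algebraMap_mul, indZero_mul_left h2K]
  have hL := ringChar_ne_two_of_algebra L h2
  simp only [twistedCount, one_mul]
  rw [sum_quadChar_mul_comp_add_sq_div hL hn (fun t ↦ indZero (T t))]
  simp_rw [add_mul, Finset.sum_add_distrib, sub_eq_add_neg, ← mul_neg,
    sum_quadChar_add_mul_indZero_trace h2, double, map_neg, indZero_neg]
  ring

omit [Fintype K] [Algebra.IsQuadraticExtension K L] h2 in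
lemma twistedCount_one_of_not_isSquare {m : L} (hm : η L m = -1) : twistedCount K 1 m = 0 := by
  simpa [twistedCount] using sum_quadChar_mul_comp_add_div_eq_zero hm fun t ↦ indZero (T t)

lemma twistedCount_one_of_notMem_range {m : L} (hm : m ∉ Set.range ι) :
    twistedCount K 1 m = η K (-1) * (1 + η L m) := by
  have hm0 : m ≠ 0 := fun h ↦ hm ⟨0, by rw [h, map_zero]⟩
  rcases quadChar_eq_one_or_neg_one hm0 with h | h
  · obtain ⟨n, rfl⟩ := (isSquare_iff_exists_sq _).mp (quadChar_eq_one_iff.mp h).2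
    have hT : T n ≠ 0 := fun hT ↦ hm ⟨_, (sq_eq_neg_norm_of_trace_eq_zero hT).symm⟩
    rw [twistedCount_one_sq h2 (by simpa using hm0), indZero_of_ne hT, h]
    ring
  · rw [twistedCount_one_of_not_isSquare h, h]
    ring

lemma twistedCount_one_algebraMap {k : K} (hk : k ≠ 0) :
    twistedCount K (1 : L) (ι k) = η K (-1) * (q * η K k - q + 2) := by
  obtain ⟨n, hn⟩ := (isSquare_iff_exists_sq _).mp
    (quadChar_eq_one_iff.mp (quadChar_algebraMap (L := L) h2 hk)).2
  have hn0 : n ≠ 0 := by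
    rintro rfl
    simp [hk] at hn
  rw [hn, twistedCount_one_sq h2 hn0]
  rcases eq_or_ne (T n) 0 with hT | hT
  · have : k = -Algebra.norm K n := (algebraMap K L).injective
      (hn.trans (sq_eq_neg_norm_of_trace_eq_zero hT))
    rw [hT, indZero_zero, this, quadChar_neg_norm_of_trace_eq_zero h2 hn0 hT]
    ring
  · have hsq : IsSquare k := by
      obtain ⟨j, rfl⟩ : n ∈ Set.range ι := by
        refine ⟨(k + Algebra.norm K n) / T n, ?_⟩
        rw [map_div₀, map_add, hn, div_eq_iff (by simpa)]
        linear_combination sq_sub_trace_mul_add_norm (K := K) n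
      rw [← map_pow] at hn
      exact (algebraMap K L).injective hn ▸ IsSquare.sq j
    rw [indZero_of_ne hT, quadChar_eq_one_iff.mpr ⟨hk, hsq⟩]
    ring

end TwistedCount

/-! ### Fourier transforms in two variables -/

section Fourier

variable {F : Type*} [Field F] [Fintype F] (ψ : AddChar F ℂ)

/-- The Fourier coefficient at `(a, b)` of a function of two variables on a finite field. -/
def fourier (a b : F) : (F → F → ℂ) →ₗ[ℂ] ℂ where
  toFun f := ∑ u, ∑ v, f u v * ψ (a * u + b * v)
  map_add' f g := by simp only [Pi.add_apply, add_mul, Finset.sum_add_distrib]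
  map_smul' r f := by
    simp only [Pi.smul_apply, smul_eq_mul, mul_assoc, Finset.mul_sum, RingHom.id_apply]

lemma fourier_apply (a b : F) (f : F → F → ℂ) :
    fourier ψ a b f = ∑ u, ∑ v, f u v * ψ (a * u + b * v) := rfl

lemma fourier_mul (a b : F) (f g : F → ℂ) :
    fourier ψ a b (fun u v ↦ f u * g v) = (∑ u, f u * ψ (a * u)) * ∑ v, g v * ψ (b * v) := by
  simp only [fourier_apply, Finset.sum_mul_sum, AddChar.map_add_eq_mul, mul_mul_mul_comm]

lemma sum_indZero_mul_addChar (a : F) : ∑ u, indZero u * ψ (a * u) = 1 := by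
  simp [sum_indZero_mul]

variable {ψ} (hψ : ψ.IsPrimitive)
include hψ

lemma sum_addChar_mul (t : F) : ∑ s, ψ (s * t) = Fintype.card F * indZero t := by
  classical
  rw [AddChar.sum_mulShift t hψ, indZero, mul_ite, mul_one, mul_zero, Nat.cast_ite, Nat.cast_zero]

lemma fourier_one (a b : F) :
    fourier ψ a b (fun _ _ ↦ 1) = Fintype.card F ^ 2 * (indZero a * indZero b) := by
  have h := fourier_mul ψ a b (fun _ ↦ 1) (fun _ ↦ 1)
  simp only [mul_one, one_mul, mul_comm a, mul_comm b, sum_addChar_mul hψ] at h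
  rw [h]
  ring

lemma fourier_indZero_right (a b : F) :
    fourier ψ a b (fun _ v ↦ indZero v) = Fintype.card F * indZero a := by
  simpa only [mul_one, one_mul, sum_indZero_mul_addChar, mul_comm a, sum_addChar_mul hψ]
    using fourier_mul ψ a b (fun _ ↦ 1) indZero

lemma fourier_addChar_mul {c : F} (hc : c ≠ 0) (a b : F) :
    fourier ψ a b (fun u v ↦ ψ (c * (u * v))) = Fintype.card F * ψ (-(a * b / c)) := by
  have inner (u : F) : ∑ v, ψ (c * (u * v)) * ψ (a * u + b * v) =
      Fintype.card F * (indZero (u + b / c) * ψ (a * u)) := by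
    rw [← indZero_mul_left hc (u + b / c), ← mul_assoc, ← sum_addChar_mul hψ, Finset.sum_mul]
    refine Finset.sum_congr rfl fun v _ ↦ ?_
    rw [← AddChar.map_add_eq_mul, ← AddChar.map_add_eq_mul]
    congr 1
    field_simp
    ring
  simp_rw [fourier_apply, inner, ← Finset.mul_sum, sum_indZero_add_mul]
  rw [mul_neg, mul_div_assoc]

end Fourier

section TraceFourier

variable {K L : Type*} [Field K] [Fintype K] [Field L] [Fintype L] [Algebra K L]

local notation "T" => Algebra.trace K L
local notation "N" => Algebra.norm K
local notation "ι" => algebraMap K L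
local notation "q" => (Fintype.card K : ℂ)

variable (L) in
/-- The additive character `χ ∘ T` of `L`. -/
def traceAddChar (χ : AddChar K ℂ) : AddChar L ℂ :=
  χ.compAddMonoidHom (Algebra.trace K L).toAddMonoidHom

omit [Fintype K] [Fintype L] in
lemma traceAddChar_apply (χ : AddChar K ℂ) (z : L) : traceAddChar L χ z = χ (T z) := rfl

variable {χ : AddChar K ℂ} (hχ : χ.IsPrimitive)
include hχ

omit [Fintype K] [Fintype L] in
lemma isPrimitive_traceAddChar [FiniteDimensional K L] [Algebra.IsSeparable K L] :
    (traceAddChar L χ).IsPrimitive := by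
  have hχ1 : χ ≠ 1 := by simpa using hχ one_ne_zero
  obtain ⟨k, hk⟩ := AddChar.ne_one_iff.mp hχ1
  obtain ⟨z, rfl⟩ := Algebra.trace_surjective K L k
  exact AddChar.IsPrimitive.of_ne_one (AddChar.ne_one_iff.mpr ⟨z, hk⟩)

variable [Algebra.IsQuadraticExtension K L]

omit hχ in
variable (K L) in
lemma card_eq_card_sq : (Fintype.card L : ℂ) = q ^ 2 := by
  rw [Module.card_eq_pow_finrank (K := K) (V := L),
    Algebra.IsQuadraticExtension.finrank_eq_two K L, Nat.cast_pow]

lemma fourier_addChar_trace {c : L} (hc : c ≠ 0) {s : K} (hs : s ≠ 0) (a b : L) :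
    fourier (traceAddChar L χ) a b (fun u v ↦ χ (s * T (c * (u * v)))) =
      q ^ 2 * χ (s⁻¹ * -T (a * b / c)) := by
  have hsc : ι s * c ≠ 0 := mul_ne_zero (by simpa) hc
  have h := fourier_addChar_mul (isPrimitive_traceAddChar hχ) hsc a b
  simp only [traceAddChar_apply, mul_assoc, trace_algebraMap_mul] at h
  rw [h, card_eq_card_sq K L, mul_neg, map_neg, ← trace_algebraMap_mul]
  congr 4
  rw [map_inv₀]
  field_simp

lemma fourier_indZero_trace {c : L} (hc : c ≠ 0) (a b : L) :
    fourier (traceAddChar L χ) a b (fun u v ↦ indZero (T (c * (u * v)))) =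
      q ^ 3 * (indZero a * indZero b) + q ^ 2 * indZero (T (a * b / c)) - q := by
  have hq : q ≠ 0 := Nat.cast_ne_zero.mpr Fintype.card_ne_zero
  have expand : (fun u v : L ↦ indZero (T (c * (u * v)))) =
      q⁻¹ • ∑ s : K, fun u v ↦ χ (s * T (c * (u * v))) := by
    ext u v
    simp [sum_addChar_mul hχ, hq]
  have term (s : K) : fourier (traceAddChar L χ) a b (fun u v ↦ χ (s * T (c * (u * v)))) =
      indZero s * (q ^ 4 * (indZero a * indZero b) - q ^ 2) +
        q ^ 2 * χ (s⁻¹ * -T (a * b / c)) := by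
    rcases eq_or_ne s 0 with rfl | hs
    · simp only [zero_mul, AddChar.map_zero_eq_one, inv_zero, indZero_zero,
        fourier_one (isPrimitive_traceAddChar hχ), card_eq_card_sq K L]
      ring
    · rw [fourier_addChar_trace hχ hc hs, indZero_of_ne hs, zero_mul, zero_add]
  have sum_inv : ∑ s : K, χ (s⁻¹ * -T (a * b / c)) = q * indZero (T (a * b / c)) := by
    rw [← indZero_neg, ← sum_addChar_mul hχ]
    exact Equiv.sum_comp (Equiv.inv K) fun s ↦ χ (s * -T (a * b / c))
  rw [expand, map_smul, map_sum, Finset.sum_congr rfl fun s _ ↦ term s, Finset.sum_add_distrib,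
    ← Finset.sum_mul, sum_indZero, ← Finset.mul_sum, sum_inv, smul_eq_mul]
  field_simp
  ring

variable (h2 : ringChar K ≠ 2)
include h2

lemma fourier_quadChar_trace {c : L} (hc : c ≠ 0) (a b : L) :
    fourier (traceAddChar L χ) a b (fun u v ↦ η K (T (c * (u * v)))) =
      q ^ 2 * (η K (-1) * η K (T (a * b / c))) := by
  have hG : gaussSum (η K) χ ≠ 0 := gaussSum_ne_zero_of_nontrivial
    (Nat.cast_ne_zero.mpr Fintype.card_ne_zero) (quadChar_ne_one h2) hχ
  have expand : (fun u v : L ↦ η K (T (c * (u * v)))) =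
      (gaussSum (η K) χ)⁻¹ • ∑ s : K, η K s • fun u v ↦ χ (s * T (c * (u * v))) := by
    ext u v
    simp only [Pi.smul_apply, Finset.sum_apply, smul_eq_mul, sum_quadChar_mul_addChar h2]
    field_simp
  have term (s : K) :
      η K s * fourier (traceAddChar L χ) a b (fun u v ↦ χ (s * T (c * (u * v)))) =
        q ^ 2 * (η K s⁻¹ * χ (s⁻¹ * -T (a * b / c))) := by
    rcases eq_or_ne s 0 with rfl | hs
    · simp
    · rw [fourier_addChar_trace hχ hc hs, quadChar_inv]
      ring
  have sum_inv : ∑ s : K, η K s⁻¹ * χ (s⁻¹ * -T (a * b / c)) =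
      η K (-T (a * b / c)) * gaussSum (η K) χ := by
    rw [← sum_quadChar_mul_addChar h2]
    exact Equiv.sum_comp (Equiv.inv K) fun s ↦ η K s * χ (s * -T (a * b / c))
  simp only [expand, map_smul, map_sum, smul_eq_mul, term, ← Finset.mul_sum, sum_inv]
  rw [neg_eq_neg_one_mul, map_mul]
  field_simp

/-- The product of characters is an average of the indicators of `T ((r + g) w) = 0`. -/
lemma fourier_quadChar_trace_mul_quadChar_trace {g : L} (hg : η L g = -1) (a b : L) :
    fourier (traceAddChar L χ) a b (fun u v ↦ η K (T (u * v)) * η K (T (g * (u * v)))) =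
      -q ^ 2 * (η K (T (a * b)) * η K (T (a * b / g))) := by
  have hgK := notMem_range_algebraMap h2 hg
  have hne (r : K) : ι r + g ≠ 0 := fun h ↦
    hgK ⟨-r, by rw [map_neg, neg_eq_of_add_eq_zero_right h]⟩
  have expand : (fun u v : L ↦ η K (T (u * v)) * η K (T (g * (u * v)))) =
      η K (-1) • ∑ r : K, η K r • fun u v ↦ indZero (T ((ι r + g) * (u * v))) := by
    ext u v
    simp only [Pi.smul_apply, Finset.sum_apply, smul_eq_mul, add_mul, map_add,
      trace_algebraMap_mul, sum_quadChar_mul_indZero h2, ← map_mul]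
    congr 1
    ring
  have dual_condition (r : K) : indZero (T (a * b / (ι r + g))) =
      indZero (r * T (a * b) + N g * T (a * b / g)) := by
    rw [← indZero_mul_left (Algebra.norm_ne_zero_iff.mpr (hne r)), norm_mul_trace_div (hne r),
      norm_mul_trace_div (ne_zero_of_quadChar_eq_neg_one hg), map_add,
      trace_algebraMap_eq_two_mul, mul_add, map_add, mul_comm _ (ι r), trace_algebraMap_mul]
    congr 1
    ring
  simp only [expand, map_smul, map_sum, fourier_indZero_trace hχ (hne _), dual_condition,
    smul_eq_mul]
  have split (r : K) : η K r * (q ^ 3 * (indZero a * indZero b) +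
      q ^ 2 * indZero (r * T (a * b) + N g * T (a * b / g)) - q) =
      (q ^ 3 * (indZero a * indZero b) - q) * η K r +
        q ^ 2 * (η K r * indZero (r * T (a * b) + N g * T (a * b / g))) := by
    ring
  have hx : η K (-1) * η K (-1) = 1 := quadChar_mul_self_of_ne (by simp)
  rw [Finset.sum_congr rfl fun r _ ↦ split r, Finset.sum_add_distrib, ← Finset.mul_sum,
    ← Finset.mul_sum, sum_quadChar h2, sum_quadChar_mul_indZero h2, neg_eq_neg_one_mul (_ * _)]
  simp only [map_mul (η K), quadChar_norm h2, hg]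
  linear_combination -q ^ 2 * η K (T (a * b)) * η K (T (a * b / g)) * hx

end TraceFourier

section LineTerm

variable {K L : Type*} [Field K] [Fintype K] [Field L] [Fintype L] [Algebra K L]

local notation "T" => Algebra.trace K L
local notation "N" => Algebra.norm K
local notation "ι" => algebraMap K L
local notation "q" => (Fintype.card K : ℂ)

variable (K) in
/-- On the lines `T (c w) = 0`, where `w = u v`, the function `η(u) (1 + η(T (d w)))`. It measures
by how much a boundary line of the model set departs from the average of the two classes of `u`. -/
def lineTerm (c d u v : L) : ℂ :=
  η L u * indZero (T (c * (u * v))) * (1 + η K (T (d * (u * v))))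

variable [Algebra.IsQuadraticExtension K L] (h2 : ringChar K ≠ 2)
include h2

lemma twistedCount_one_mul_mul {δ e : L} (hδ : δ ≠ 0) (hT : T δ = 0) (he : η L e = -1) (h : L) :
    twistedCount K 1 (h * δ * ι (T (e * δ))) =
      η K (-1) - η L h + q * indZero (T h) * (η K (T (h / e)) - η K (-1)) := by
  have he0 := ne_zero_of_quadChar_eq_neg_one he
  have hκ : T (e * δ) ≠ 0 := trace_mul_ne_zero (notMem_range_algebraMap h2 he) hδ hT
  have sq_delta := sq_eq_neg_norm_of_trace_eq_zero hT
  have hx : η K (-1) * η K (-1) = 1 := quadChar_mul_self_of_ne (by simp)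
  rcases eq_or_ne (T h) 0 with hTh | hTh
  · obtain ⟨k, rfl⟩ := exists_eq_algebraMap_mul hδ hT hTh
    rcases eq_or_ne k 0 with rfl | hk
    · simp [twistedCount_zero_right h2]
      ring
    have hdual : η K (T (δ / e)) = -(η K (-1) * η K (T (e * δ))) := by
      have h := congrArg (η K) (norm_mul_trace_div he0 δ (K := K))
      rw [hT, mul_zero, zero_sub, map_mul, quadChar_norm h2, he, mul_comm δ e,
        neg_eq_neg_one_mul (T _), map_mul] at h
      linear_combination -h
    have hm : ι k * δ * δ * ι (T (e * δ)) = ι (k * -N δ * T (e * δ)) := by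
      rw [map_mul ι, map_mul ι, ← sq_delta]
      ring
    rw [hm, twistedCount_one_algebraMap h2 (mul_ne_zero (mul_ne_zero hk
      (neg_ne_zero.mpr (Algebra.norm_ne_zero_iff.mpr hδ))) hκ), hTh, indZero_zero, mul_div_assoc,
      trace_algebraMap_mul]
    simp only [map_mul (η _), quadChar_neg_norm_of_trace_eq_zero h2 hδ hT, hdual,
      quadChar_algebraMap h2 hk, quadChar_of_trace_eq_zero h2 hδ hT]
    ring
  · have hm : h * δ * ι (T (e * δ)) ∉ Set.range ι := by
      rintro ⟨k, hk⟩
      have : h = ι (k / (-N δ * T (e * δ))) * δ := by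
        have hικ : ι (T (e * δ)) ≠ 0 := by simpa
        rw [map_div₀, map_mul ι, ← sq_delta, hk, div_mul_eq_mul_div,
          eq_div_iff (mul_ne_zero (pow_ne_zero 2 hδ) hικ)]
        ring
      rw [this, trace_algebraMap_mul, hT, mul_zero] at hTh
      exact hTh rfl
    rw [twistedCount_one_of_notMem_range h2 hm, indZero_of_ne hTh, map_mul, map_mul,
      quadChar_algebraMap h2 hκ, quadChar_of_trace_eq_zero h2 hδ hT]
    linear_combination -η L h * hx

variable {χ : AddChar K ℂ} (hχ : χ.IsPrimitive)

lemma sum_lineTerm_mul_addChar {c d δ : L} (hc : c ≠ 0) (hδ : δ ≠ 0) (hT : T δ = 0)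
    (hκ : T (d / c * δ) ≠ 0) (b u : L) :
    ∑ v, lineTerm K c d u v * traceAddChar L χ (b * v) =
      η L u * ∑ x : K, χ (x ^ 2 * T (b / c * δ * ι (T (d / c * δ)) / u)) := by
  rcases eq_or_ne u 0 with rfl | hu
  · simp [lineTerm]
  have substitute : ∑ v, lineTerm K c d u v * traceAddChar L χ (b * v) =
      ∑ w, indZero (T w) *
        (η L u * ((1 + η K (T (d / c * w))) * traceAddChar L χ (b / c * w / u))) := by
    refine Fintype.sum_equiv (Equiv.mulLeft₀ (c * u) (mul_ne_zero hc hu)) _ _ fun v ↦ ?_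
    simp only [Equiv.mulLeft₀_apply, lineTerm]
    rw [show d / c * (c * u * v) = d * (u * v) by field_simp,
      show b / c * (c * u * v) / u = b * v by field_simp, mul_assoc c]
    ring
  rw [substitute, sum_indZero_trace_mul hδ hT, ← Finset.mul_sum]
  have term (k : K) : (1 + η K (T (d / c * (ι k * δ)))) * traceAddChar L χ (b / c * (ι k * δ) / u) =
      (1 + η K (T (d / c * δ)) * η K k) * χ (k * T (b / c * δ / u)) := by
    rw [traceAddChar_apply, mul_left_comm, trace_algebraMap_mul, mul_left_comm, mul_div_assoc,
      trace_algebraMap_mul, map_mul, mul_comm (η K k)]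
  rw [Finset.sum_congr rfl fun k _ ↦ term k, ← sum_comp_mul_sq h2 hκ]
  congr! 3 with x
  rw [mul_comm (_ * δ) (ι _), mul_div_assoc (ι _), trace_algebraMap_mul]
  ring

include hχ

lemma sum_quadChar_mul_traceAddChar (a : L) :
    ∑ u, η L u * traceAddChar L χ (a * u) = -η K (-1) * q * η L a := by
  have hχ1 : χ ≠ 1 := by simpa using hχ one_ne_zero
  have gauss : gaussSum (η L) (traceAddChar L χ) = -η K (-1) * q := by
    rw [gaussSum, show ∑ z, η L z * traceAddChar L χ z = _ from
      sum_quadChar_mul_comp_trace h2 fun t ↦ χ t, AddChar.sum_eq_zero_of_ne_one hχ1]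
    simp
  simp_rw [mul_comm a, sum_quadChar_mul_addChar (ringChar_ne_two_of_algebra L h2), gauss]
  ring

lemma fourier_lineTerm {c d δ : L} (hc : c ≠ 0) (hδ : δ ≠ 0) (hT : T δ = 0)
    (hκ : T (d / c * δ) ≠ 0) (a b : L) :
    fourier (traceAddChar L χ) a b (lineTerm K c d) =
      -η K (-1) * q * η L a + q * twistedCount K a (b / c * δ * ι (T (d / c * δ))) := by
  set m := b / c * δ * ι (T (d / c * δ))
  have substitute (x : K) :
      ∑ u, η L u * χ (T (a * u) + x ^ 2 * T (m / u)) =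
        indZero x * (-η K (-1) * q * η L a) + ∑ u, η L u * χ (x * T (a * u + m / u)) := by
    rcases eq_or_ne x 0 with rfl | hx
    · simpa [sum_quadChar (ringChar_ne_two_of_algebra L h2), traceAddChar_apply] using
        sum_quadChar_mul_traceAddChar h2 hχ a
    · have hιx : ι x ≠ 0 := by simpa
      rw [indZero_of_ne hx, zero_mul, zero_add]
      symm
      refine Fintype.sum_equiv (Equiv.mulLeft₀ (ι x) hιx) _ _ fun u ↦ ?_
      simp only [Equiv.mulLeft₀_apply]
      rw [map_mul (η L), quadChar_algebraMap h2 hx, one_mul, mul_left_comm, ← trace_algebraMap_mul,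
        ← trace_algebraMap_mul, ← map_add]
      congr 3
      rw [map_pow]
      field_simp
  calc fourier (traceAddChar L χ) a b (lineTerm K c d)
    _ = ∑ x : K, ∑ u, η L u * χ (T (a * u) + x ^ 2 * T (m / u)) := by
      rw [fourier_apply, Finset.sum_comm (s := Finset.univ (α := K))]
      refine Finset.sum_congr rfl fun u _ ↦ ?_
      simp_rw [AddChar.map_add_eq_mul, mul_left_comm _ (traceAddChar L χ (a * u)),
        ← Finset.mul_sum, sum_lineTerm_mul_addChar h2 hc hδ hT hκ, traceAddChar_apply]
      ring
    _ = _ := by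
      simp_rw [substitute, Finset.sum_add_distrib, ← Finset.sum_mul, sum_indZero, one_mul]
      rw [Finset.sum_comm]
      simp_rw [← Finset.mul_sum, sum_addChar_mul hχ, twistedCount, Finset.mul_sum]
      congr! 2
      ring

lemma fourier_lineTerm_zero_left {c d : L} (hc : c ≠ 0) (hd : η L (d / c) = -1) (b : L) :
    fourier (traceAddChar L χ) 0 b (lineTerm K c d) = q * (q - 1) * (η L b * η L c) := by
  obtain ⟨δ, hδ, hT⟩ := exists_ne_zero_trace_eq_zero K L
  have hκ := trace_mul_ne_zero (notMem_range_algebraMap h2 hd) hδ hT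
  have hx : η K (-1) * η K (-1) = 1 := quadChar_mul_self_of_ne (by simp)
  rw [fourier_lineTerm h2 hχ hc hδ hT hκ, twistedCount_comm, twistedCount_zero_right h2, map_mul,
    map_mul, quadChar_div, quadChar_algebraMap h2 hκ, quadChar_of_trace_eq_zero h2 hδ hT,
    quadChar_zero]
  linear_combination q * (q - 1) * η L b * η L c * hx

lemma fourier_lineTerm_of_ne_zero {c d : L} (hc : c ≠ 0) (hd : η L (d / c) = -1) {a : L}
    (ha : a ≠ 0) (b : L) :
    fourier (traceAddChar L χ) a b (lineTerm K c d) = -q * (η L b * η L c) +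
      η L a * q ^ 2 * indZero (T (a * b / c)) * (η K (T (a * b / d)) - η K (-1)) := by
  obtain ⟨δ, hδ, hT⟩ := exists_ne_zero_trace_eq_zero K L
  have hκ := trace_mul_ne_zero (notMem_range_algebraMap h2 hd) hδ hT
  have ha1 := quadChar_mul_self_of_ne ha
  rw [fourier_lineTerm h2 hχ hc hδ hT hκ, twistedCount_eq_mul ha, ← mul_assoc, ← mul_assoc a,
    ← mul_assoc a, ← mul_div_assoc, twistedCount_one_mul_mul h2 hδ hT hd,
    div_div_div_cancel_right₀ hc, quadChar_div, map_mul]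
  linear_combination -q * η L b * η L c * ha1

end LineTerm

/-! ### The intrinsic form of `E₀` -/

section ModelSet

variable {K L : Type*} [Field K] [Fintype K] [Field L] [Fintype L] [Algebra K L]

local notation "T" => Algebra.trace K L
local notation "q" => (Fintype.card K : ℂ)

variable (K) in
/-- The set `E₀` in intrinsic form: membership of `(u, v)` with `u ≠ 0` depends on the class of `u`
and on the classes of the traces of `u v` and `g u v`, where `g` is `ω ^ c` in the application. -/
def modelSet (g : L) : Set (L × L) :=
  {w | (w.1 = 0 ∧ η L w.2 = -η K (-1)) ∨
    (η L w.1 = 1 ∧ η K (T (g * (w.1 * w.2))) = 1 ∧ η K (T (w.1 * w.2)) ≠ -1) ∨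
    (η L w.1 = -1 ∧ η K (T (w.1 * w.2)) = 1 ∧ η K (T (g * (w.1 * w.2))) ≠ -1)}

variable [Algebra.IsQuadraticExtension K L] (h2 : ringChar K ≠ 2)
include h2

omit [Fintype K] in
lemma trace_ne_zero_or_trace_mul_ne_zero [Finite K] {g w : L} (hg : η L g = -1) (hw : w ≠ 0) :
    T w ≠ 0 ∨ T (g * w) ≠ 0 :=
  or_iff_not_imp_left.mpr fun h ↦
    trace_mul_ne_zero (notMem_range_algebraMap h2 hg) hw (not_not.mp h)

lemma four_mul_indicator_modelSet {g : L} (hg : η L g = -1) (u v : L) :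
    4 * (modelSet K g).indicator 1 (u, v) =
      (1 + η K (T (u * v))) * (1 + η K (T (g * (u * v)))) +
        (lineTerm K 1 g u v - lineTerm K g 1 u v) +
          (indZero u * (1 - 2 * η K (-1) * η L v - indZero v) - indZero v) := by
  classical
  have hx : η K (-1) ≠ 0 := ((isUnit_neg_one).map (η K)).ne_zero
  rcases eq_or_ne v 0 with rfl | hv
  · simp [modelSet, lineTerm, hx]
  rcases eq_or_ne u 0 with rfl | hu
  · rcases quadChar_eq_one_or_neg_one hv with h | h <;>
    rcases quadChar_eq_one_or_neg_one (neg_ne_zero.mpr (one_ne_zero (α := K))) with h' | h' <;>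
    norm_num [modelSet, lineTerm, Set.indicator_apply, h, h', indZero_of_ne hv]
  have huv := mul_ne_zero hu hv
  simp only [modelSet, lineTerm, Set.indicator_apply, Set.mem_ofPred_eq, indZero_of_ne hu,
    indZero_of_ne hv, hu, one_mul, false_and, false_or, Pi.one_apply]
  rcases trace_ne_zero_or_trace_mul_ne_zero (K := K) h2 hg huv with ht | ht
  · rcases quadChar_eq_one_or_neg_one hu with h | h <;>
    rcases quadChar_eq_one_or_neg_one ht with ht' | ht' <;>
    rcases indZero_quadChar_cases (T (g * (u * v))) with ⟨hs, hs'⟩ | ⟨hs, hs' | hs'⟩ <;>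
    norm_num [h, ht', hs, hs', indZero_of_ne ht]
  · rcases quadChar_eq_one_or_neg_one hu with h | h <;>
    rcases quadChar_eq_one_or_neg_one ht with ht' | ht' <;>
    rcases indZero_quadChar_cases (T (u * v)) with ⟨hs, hs'⟩ | ⟨hs, hs' | hs'⟩ <;>
    norm_num [h, ht', hs, hs', indZero_of_ne ht]

variable {χ : AddChar K ℂ} (hχ : χ.IsPrimitive)
include hχ

lemma fourier_axes (a b : L) :
    fourier (traceAddChar L χ) a b
        (fun u v ↦ indZero u * (1 - 2 * η K (-1) * η L v - indZero v) - indZero v) =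
      q ^ 2 * (indZero b - indZero a) + 2 * q * η L b - 1 := by
  have hψ := isPrimitive_traceAddChar hχ (L := L)
  have hx : η K (-1) * η K (-1) = 1 := quadChar_mul_self_of_ne (by simp)
  have split : (fun u v : L ↦
      indZero u * (1 - 2 * η K (-1) * η L v - indZero v) - indZero v) =
      (fun u v ↦ indZero u * (1 - 2 * η K (-1) * η L v - indZero v)) - fun _ v ↦ indZero v := rfl
  have sum_one : ∑ v, traceAddChar L χ (b * v) = q ^ 2 * indZero b := by
    simp_rw [mul_comm b, sum_addChar_mul hψ, card_eq_card_sq K L]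
  rw [split, map_sub, fourier_mul, fourier_indZero_right hψ, sum_indZero_mul_addChar,
    card_eq_card_sq K L]
  simp_rw [sub_mul, Finset.sum_sub_distrib, one_mul, sum_one, mul_assoc, ← Finset.mul_sum,
    sum_quadChar_mul_traceAddChar h2 hχ, sum_indZero_mul_addChar]
  linear_combination 2 * q * η L b * hx

lemma four_mul_fourier_modelSet {g : L} (hg : η L g = -1) (a b : L) :
    4 * fourier (traceAddChar L χ) a b (fun u v ↦ (modelSet K g).indicator 1 (u, v)) =
      q ^ 4 * (indZero a * indZero b) +
        q ^ 2 * (η K (-1) * η K (T (a * b)) + η K (-1) * η K (T (a * b / g)) -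
          η K (T (a * b)) * η K (T (a * b / g))) +
        (fourier (traceAddChar L χ) a b (lineTerm K 1 g) -
          fourier (traceAddChar L χ) a b (lineTerm K g 1)) +
        (q ^ 2 * (indZero b - indZero a) + 2 * q * η L b - 1) := by
  have expand : (4 : ℂ) • (fun u v ↦ (modelSet K g).indicator 1 (u, v)) =
      (fun _ _ ↦ 1) + (fun u v ↦ η K (T (1 * (u * v)))) + (fun u v ↦ η K (T (g * (u * v)))) +
        (fun u v ↦ η K (T (u * v)) * η K (T (g * (u * v)))) +
        (lineTerm K 1 g - lineTerm K g 1) +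
        fun u v ↦ indZero u * (1 - 2 * η K (-1) * η L v - indZero v) - indZero v := by
    ext u v
    simp only [Pi.smul_apply, Pi.add_apply, Pi.sub_apply, smul_eq_mul,
      four_mul_indicator_modelSet h2 hg, one_mul]
    ring
  rw [← smul_eq_mul, ← map_smul, expand]
  simp only [map_add, map_sub, fourier_one (isPrimitive_traceAddChar hχ), card_eq_card_sq K L,
    fourier_quadChar_trace hχ h2 one_ne_zero,
    fourier_quadChar_trace hχ h2 (ne_zero_of_quadChar_eq_neg_one hg),
    fourier_quadChar_trace_mul_quadChar_trace hχ h2 hg, fourier_axes h2 hχ, div_one]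
  ring

lemma four_mul_fourier_modelSet_zero_left {g : L} (hg : η L g = -1) (b : L) :
    4 * fourier (traceAddChar L χ) 0 b (fun u v ↦ (modelSet K g).indicator 1 (u, v)) =
      q ^ 4 * indZero b + q ^ 2 * (2 * η L b + indZero b - 1) - 1 := by
  rw [four_mul_fourier_modelSet h2 hχ hg, fourier_lineTerm_zero_left h2 hχ one_ne_zero (by simpa),
    fourier_lineTerm_zero_left h2 hχ (ne_zero_of_quadChar_eq_neg_one hg)
      (by rwa [one_div, quadChar_inv]), hg]
  simp
  ring

lemma four_mul_fourier_modelSet_of_ne_zero {g : L} (hg : η L g = -1) {a : L} (ha : a ≠ 0)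
    (b : L) :
    4 * fourier (traceAddChar L χ) a b (fun u v ↦ (modelSet K g).indicator 1 (u, v)) =
      q ^ 2 * (η K (-1) * η K (T (a * b)) + η K (-1) * η K (T (a * b / g)) -
          η K (T (a * b)) * η K (T (a * b / g)) +
        η L a * (indZero (T (a * b)) * (η K (T (a * b / g)) - η K (-1)) -
          indZero (T (a * b / g)) * (η K (T (a * b)) - η K (-1))) + indZero b) - 1 := by
  rw [four_mul_fourier_modelSet h2 hχ hg,
    fourier_lineTerm_of_ne_zero h2 hχ one_ne_zero (by simpa) ha,
    fourier_lineTerm_of_ne_zero h2 hχ (ne_zero_of_quadChar_eq_neg_one hg)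
      (by rwa [one_div, quadChar_inv]) ha, hg, indZero_of_ne ha, div_one]
  simp only [map_one]
  ring

lemma four_mul_fourier_modelSet_eq_or {g : L} (hg : η L g = -1) {a b : L}
    (hab : (a, b) ≠ (0, 0)) :
    4 * fourier (traceAddChar L χ) a b (fun u v ↦ (modelSet K g).indicator 1 (u, v)) =
        q ^ 2 - 1 ∨
      4 * fourier (traceAddChar L χ) a b (fun u v ↦ (modelSet K g).indicator 1 (u, v)) =
        -3 * q ^ 2 - 1 := by
  have hg0 := ne_zero_of_quadChar_eq_neg_one hg
  rcases eq_or_ne a 0 with rfl | ha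
  · have hb : b ≠ 0 := by simpa using hab
    rw [four_mul_fourier_modelSet_zero_left h2 hχ hg, indZero_of_ne hb]
    rcases quadChar_eq_one_or_neg_one hb with h | h <;> rw [h] <;> [left; right] <;> ring
  rw [four_mul_fourier_modelSet_of_ne_zero h2 hχ hg ha]
  rcases eq_or_ne b 0 with rfl | hb
  · simp
  replace hab := mul_ne_zero ha hb
  have hnz : indZero (T (a * b)) = 0 ∨ indZero (T (a * b / g)) = 0 := by
    have h := trace_ne_zero_or_trace_mul_ne_zero (K := K) h2 hg (div_ne_zero hab hg0)
    rw [mul_div_cancel₀ _ hg0] at h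
    exact (h.imp indZero_of_ne indZero_of_ne).symm
  have hx := quadChar_eq_one_or_neg_one (neg_ne_zero.mpr (one_ne_zero (α := K)))
  rw [indZero_of_ne hb]
  have hs := indZero_quadChar_cases (T (a * b))
  have ht := indZero_quadChar_cases (T (a * b / g))
  have hα := quadChar_eq_one_or_neg_one ha
  -- With `s = η (T (a b))`, `t = η (T (a b / g))` and `x = η (-1) = ±1` the coefficient of `q²` is
  -- `x s + x t - s t` if `s t ≠ 0`, and otherwise a sign `x s` or `x t` corrected by a line term.
  grind

end ModelSet

section TypeQ

variable {K L : Type} [Field K] [Fintype K] [Field L] [Fintype L] [Algebra K L]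

variable (K) in
omit [Fintype K] in
lemma exists_isPrimitive_psiL_eq [Finite K] {p : ℕ} (hp : p.Prime) [CharP L p] :
    ∃ χ : AddChar K ℂ, χ.IsPrimitive ∧ psiL p L = traceAddChar L χ := by
  have : Fact p.Prime := ⟨hp⟩
  have : CharP K p := (algebraMap K L).charP (algebraMap K L).injective p
  let _ : Algebra (ZMod p) L := ZMod.algebra L p
  let _ : Algebra (ZMod p) K := ZMod.algebra K p
  have : IsScalarTower (ZMod p) K L := IsScalarTower.of_algebraMap_eq' (RingHom.ext_zmod _ _)
  have hζ : IsPrimitiveRoot (zetaP p) p := Complex.isPrimitiveRoot_exp p hp.ne_zero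
  refine ⟨traceAddChar K (AddChar.zmodChar p hζ.pow_eq_one), isPrimitive_traceAddChar
    (AddChar.zmodChar_primitive_of_primitive_root p hζ), funext fun z ↦ ?_⟩
  rw [traceAddChar_apply, traceAddChar_apply, Algebra.trace_trace]
  rfl

lemma fourier_indicator {F : Type*} [Field F] [Fintype F] (ψ : AddChar F ℂ) (a b : F)
    (E : Set (F × F)) : fourier ψ a b (fun u v ↦ E.indicator 1 (u, v)) =
      ∑ᶠ z ∈ E, ψ (a * z.1 + b * z.2) := by
  classical
  rw [finsum_mem_def, finsum_eq_sum_of_fintype, Fintype.sum_prod_type]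
  simp [fourier_apply, Set.indicator_apply]

theorem isTypeQ_modelSet [Algebra.IsQuadraticExtension K L] (h2 : ringChar K ≠ 2) {p : ℕ}
    (hp : p.Prime) [CharP L p] {g : L} (hg : η L g = -1) :
    IsTypeQ p (Fintype.card K) L (modelSet K g) := by
  obtain ⟨χ, hχ, hψ⟩ := exists_isPrimitive_psiL_eq K (L := L) hp
  constructor
  · have hcount : (∑ᶠ _ ∈ modelSet K g, 1 : ℂ) = (modelSet K g).ncard := by
      rw [← Nat.cast_one, ← Nat.cast_finsum_mem (Set.toFinite _), finsum_one]
    have h := four_mul_fourier_modelSet_zero_left h2 hχ hg 0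
    simp only [fourier_indicator, zero_mul, add_zero, AddChar.map_zero_eq_one, hcount] at h
    have card_add_one : 4 * (modelSet K g).ncard + 1 = Fintype.card K ^ 4 := by
      have : (4 * (modelSet K g).ncard + 1 : ℂ) = Fintype.card K ^ 4 := by
        rw [h]
        simp
      exact_mod_cast this
    lia
  · intro a b hab
    rw [psiSum, hψ, ← fourier_indicator]
    refine (four_mul_fourier_modelSet_eq_or h2 hχ hg hab).imp (fun h ↦ ?_) fun h ↦ ?_ <;>
    linear_combination h / 4

end TypeQ

section NegOne

variable {K : Type*} [Field K] [Fintype K] (h2 : ringChar K ≠ 2)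
include h2

lemma quadChar_neg_one : η K (-1) = (-1) ^ ((Fintype.card K - 1) / 2) := by
  classical
  have hodd := FiniteField.odd_card_of_char_ne_two h2
  rw [quadChar_apply, quadraticChar_neg_one h2, ZMod.χ₄_eq_neg_one_pow hodd,
    show Fintype.card K / 2 = (Fintype.card K - 1) / 2 by lia]
  push_cast
  rfl

lemma neg_quadChar_neg_one :
    -η K (-1) = (-1) ^ (if Fintype.card K % 4 = 3 then 0 else 1) := by
  have hodd := FiniteField.odd_card_of_char_ne_two h2
  rw [quadChar_neg_one h2]
  split_ifs with h
  · rw [Odd.neg_one_pow (Nat.odd_iff.mpr (by lia)), neg_neg, pow_zero]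
  · rw [Even.neg_one_pow (Nat.even_iff.mpr (by lia)), pow_one]

end NegOne

section IsPrim

variable {L : Type} [Field L] {ω : L} (hω : IsPrim L ω) (hL : ringChar L ≠ 2)
include hω hL

lemma ne_zero_of_isPrim : ω ≠ 0 := by
  rintro rfl
  obtain ⟨n, hn⟩ := hω (-1) (by simp)
  rcases eq_or_ne n 0 with rfl | h
  · exact Ring.neg_one_ne_one_of_char_ne_two hL (by simpa using hn)
  · simp [zero_pow h] at hn

variable [Fintype L]

lemma orderOf_of_isPrim : orderOf ω = Fintype.card L - 1 := by
  let w := Units.mk0 ω (ne_zero_of_isPrim hω hL)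
  have hw : orderOf w = Nat.card Lˣ := orderOf_eq_card_of_forall_mem_zpowers fun x ↦ by
    obtain ⟨n, hn⟩ := hω x x.ne_zero
    exact ⟨n, Units.ext (by simp [w, hn])⟩
  rwa [Nat.card_units, Nat.card_eq_fintype_card, ← orderOf_units, Units.val_mk0] at hw

lemma quadChar_of_isPrim : η L ω = -1 := by
  refine (quadChar_eq_one_or_neg_one (ne_zero_of_isPrim hω hL)).resolve_left fun h ↦
    quadChar_ne_one hL ?_
  ext a
  obtain ⟨n, hn⟩ := hω a a.ne_zero
  rw [hn, map_pow, h, one_pow, ← hn, MulChar.one_apply a.isUnit]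

lemma quadChar_pow_of_isPrim (n : ℕ) : η L (ω ^ n) = (-1) ^ n := by
  rw [map_pow, quadChar_of_isPrim hω hL]

lemma mem_cyc_two_iff {n : ℕ} {y : L} : y ∈ cyc L ω 2 n ↔ η L y = (-1) ^ n := by
  constructor
  · rintro ⟨k, rfl⟩
    rw [← pow_mul, ← pow_add, quadChar_pow_of_isPrim hω hL, pow_add, pow_mul]
    simp
  · intro h
    have hy := ne_zero_of_quadChar_eq_neg_one_pow h
    have hωn := pow_ne_zero n (ne_zero_of_isPrim hω hL)
    obtain ⟨m, hm⟩ := hω (y / ω ^ n) (div_ne_zero hy hωn)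
    have hm2 : Even m := by
      have := quadChar_pow_of_isPrim hω hL m
      rwa [← hm, quadChar_div, quadChar_pow_of_isPrim hω hL, h, ← mul_pow, neg_one_mul, neg_neg,
        one_pow, eq_comm, neg_one_pow_eq_one_iff_even (by norm_num)] at this
    obtain ⟨k, rfl⟩ := hm2.two_dvd
    exact ⟨k, by rw [← pow_mul, ← hm, mul_div_cancel₀ _ hωn]⟩

end IsPrim

/-! ### From index sets to the intrinsic form -/

section SignedCount

lemma card_filter_even_sub_card_filter_odd (A : Finset ℕ) :
    ((A.filter Even).card : ℤ) - (A.filter Odd).card = ∑ i ∈ A, (-1) ^ i := by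
  rw [Finset.natCast_card_filter, Finset.natCast_card_filter, ← Finset.sum_sub_distrib]
  refine Finset.sum_congr rfl fun i _ ↦ ?_
  rcases i.even_or_odd with h | h
  · simp [h]
  · simp [h, Nat.not_even_iff_odd.mpr h]

/-- At most two indices lie in the symmetric difference and their signs have to add up to `-2 e`,
so every one of them contributes `-e`. -/
lemma neg_one_pow_of_mem_sdiff {A B : Finset ℕ} {e : ℤ} (he : e = 1 ∨ e = -1)
    (hcard : (A \ B).card + (B \ A).card ≤ 2)
    (hsum : ∑ i ∈ A, (-1) ^ i - ∑ i ∈ B, (-1) ^ i = -2 * e) :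
    (∀ i ∈ A \ B, (-1) ^ i = -e) ∧ ∀ i ∈ B \ A, (-1) ^ i = e := by
  have he2 : e * e = 1 := by rcases he with rfl | rfl <;> rfl
  have nonneg (i : ℕ) : 0 ≤ 1 + e * (-1) ^ i ∧ 0 ≤ 1 - e * (-1) ^ i := by
    rcases he with rfl | rfl <;> rcases neg_one_pow_eq_or ℤ i with h | h <;> simp [h]
  have nonneg_A := Finset.sum_nonneg fun i (_ : i ∈ A \ B) ↦ (nonneg i).1
  have nonneg_B := Finset.sum_nonneg fun i (_ : i ∈ B \ A) ↦ (nonneg i).2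
  have total : ∑ i ∈ A \ B, (1 + e * (-1) ^ i) + ∑ i ∈ B \ A, (1 - e * (-1) ^ i) ≤ 0 := by
    rw [← Finset.sum_sdiff_sub_sum_sdiff] at hsum
    simp only [Finset.sum_add_distrib, Finset.sum_sub_distrib, ← Finset.mul_sum,
      Finset.sum_const, nsmul_eq_mul, mul_one]
    have : ((A \ B).card : ℤ) + (B \ A).card ≤ 2 := mod_cast hcard
    linear_combination this + e * hsum - 2 * he2
  have zero_A := (Finset.sum_eq_zero_iff_of_nonneg fun i _ ↦ (nonneg i).1).mp
    (show ∑ i ∈ A \ B, (1 + e * (-1) ^ i) = 0 by lia)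
  have zero_B := (Finset.sum_eq_zero_iff_of_nonneg fun i _ ↦ (nonneg i).2).mp
    (show ∑ i ∈ B \ A, (1 - e * (-1) ^ i) = 0 by lia)
  exact ⟨fun i hi ↦ by linear_combination e * zero_A i hi - (-1) ^ i * he2,
    fun i hi ↦ by linear_combination -e * zero_B i hi - (-1) ^ i * he2⟩

lemma sdiff_eq_of_signed_ncard {A B P Q : Set ℕ} (hA : A.Finite) (hB : B.Finite)
    (hP : P.Subsingleton) (hQ : Q.Subsingleton) {e : ℤ} (he : e = 1 ∨ e = -1)
    (hPe : ∀ i ∈ P, (-1) ^ i = -e) (hQe : ∀ i ∈ Q, (-1) ^ i = e)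
    (hsymm : (A \ B) ∪ (B \ A) = P ∪ Q)
    (hpar : ((A ∩ {i | Even i}).ncard : ℤ) + (B ∩ {i | Odd i}).ncard =
      ((A ∩ {i | Odd i}).ncard : ℤ) + (B ∩ {i | Even i}).ncard - 2 * e) :
    A \ B = P ∧ B \ A = Q := by
  have card_le : (A \ B).ncard + (B \ A).ncard ≤ 2 := by
    rw [← Set.ncard_union_eq disjoint_sdiff_sdiff hA.sdiff hB.sdiff, hsymm]
    have := Set.ncard_union_le P Q
    have := (Set.ncard_le_one hP.finite).mpr fun _ h _ h' ↦ hP h h'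
    have := (Set.ncard_le_one hQ.finite).mpr fun _ h _ h' ↦ hQ h h'
    lia
  lift A to Finset ℕ using hA
  lift B to Finset ℕ using hB
  have signs := neg_one_pow_of_mem_sdiff he (A := A) (B := B)
    (by simpa only [← Finset.coe_sdiff, Set.ncard_coe_finset] using card_le) (by
      simp only [Set.inter_def, Finset.mem_coe, Set.mem_ofPred_eq, ← Finset.coe_filter,
        Set.ncard_coe_finset] at hpar
      rw [← card_filter_even_sub_card_filter_odd, ← card_filter_even_sub_card_filter_odd]
      linear_combination hpar)
  have ne (i : ℕ) (h : (-1) ^ i = -e) (h' : (-1) ^ i = e) : False := by lia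
  have mem (i : ℕ) := Set.ext_iff.mp hsymm i
  simp only [← Finset.coe_sdiff, Set.mem_union, Finset.mem_coe] at mem ⊢
  constructor <;> ext i
  · exact ⟨fun h ↦ ((mem i).mp (.inl h)).resolve_right fun h' ↦ ne i (signs.1 i h) (hQe i h'),
      fun h ↦ ((mem i).mpr (.inl h)).resolve_right fun h' ↦ ne i (hPe i h) (signs.2 i h')⟩
  · exact ⟨fun h ↦ ((mem i).mp (.inr h)).resolve_left fun h' ↦ ne i (hPe i h') (signs.2 i h),
      fun h ↦ ((mem i).mpr (.inr h)).resolve_left fun h' ↦ ne i (signs.1 i h') (hQe i h)⟩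

end SignedCount

section Indices

variable {K L : Type} [Field K] [Fintype K] [Field L] [Algebra K L]

local notation "T" => Algebra.trace K L
local notation "ι" => algebraMap K L

variable (K) in
/-- The exponents modulo `2 (q + 1)` whose shift by `c` has trace `0`: this is `I₁` for `c = 0`,
and `J₁` in general. -/
def zeroIndices (ω : L) (c : ℕ) : Set ℕ :=
  {i | i < 2 * Fintype.card K + 2 ∧ T (ω ^ (i + c)) = 0}

variable (K) in
/-- The exponents modulo `2 (q + 1)` whose shift by `c` has nonzero square trace: this is `I₂` for
`c = 0`, and `J₂` in general. -/
def squareIndices (ω : L) (c : ℕ) : Set ℕ :=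
  {i | i < 2 * Fintype.card K + 2 ∧ T (ω ^ (i + c)) ∈ sqSet K}

lemma mem_sqSet_iff {y : K} : y ∈ sqSet K ↔ η K y = 1 := by
  rw [quadChar_eq_one_iff]
  constructor
  · rintro ⟨z, hz, rfl⟩
    exact ⟨pow_ne_zero 2 hz, z, sq z⟩
  · rintro ⟨h, z, rfl⟩
    exact ⟨z, left_ne_zero_of_mul h, (sq z).symm⟩

lemma quadChar_ne_neg_one_iff {y : K} : η K y ≠ -1 ↔ y = 0 ∨ η K y = 1 := by
  rcases eq_or_ne y 0 with rfl | hy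
  · simp
  · rcases quadChar_eq_one_or_neg_one hy with h | h <;> norm_num [h, hy]

lemma mem_squareIndices_inter_iff {ω : L} {a b i : ℕ} :
    i ∈ squareIndices K ω a ∩ (zeroIndices K ω b ∪ squareIndices K ω b) ↔
      i < 2 * Fintype.card K + 2 ∧
        η K (T (ω ^ a * ω ^ i)) = 1 ∧ η K (T (ω ^ b * ω ^ i)) ≠ -1 := by
  simp only [squareIndices, zeroIndices, Set.mem_inter_iff, Set.mem_union, Set.mem_ofPred_eq,
    mem_sqSet_iff, quadChar_ne_neg_one_iff, pow_add, mul_comm (ω ^ i)]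
  tauto

lemma quadChar_trace_mul_algebraMap_sq_mul {k : K} (hk : k ≠ 0) (g w : L) :
    η K (T (g * (ι k ^ 2 * w))) = η K (T (g * w)) := by
  rw [mul_left_comm, ← map_pow, trace_algebraMap_mul, sq, map_mul, map_mul,
    quadChar_mul_self_of_ne hk, one_mul]

variable [Algebra.IsQuadraticExtension K L] (h2 : ringChar K ≠ 2) {ω : L} (hω : IsPrim L ω)
include h2 hω

lemma exists_eq_algebraMap_sq_mul_pow {w : L} (hw : w ≠ 0) :
    ∃ i < 2 * Fintype.card K + 2, ∃ k : K, k ≠ 0 ∧ w = ι k ^ 2 * ω ^ i := by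
  have := Module.finite_of_finite K (M := L)
  have hω0 := ne_zero_of_isPrim hω (ringChar_ne_two_of_algebra L h2)
  have norm_eq : ι (Algebra.norm K ω) = ω ^ (Fintype.card K + 1) := by
    rw [FiniteField.algebraMap_norm_eq_pow_sum,
      Algebra.IsQuadraticExtension.finrank_eq_two K L]
    simp [Finset.sum_range_succ, add_comm]
  obtain ⟨n, rfl⟩ := hω w hw
  refine ⟨n % (2 * Fintype.card K + 2), Nat.mod_lt _ (by lia),
    Algebra.norm K ω ^ (n / (2 * Fintype.card K + 2)),
    pow_ne_zero _ (Algebra.norm_ne_zero_iff.mpr hω0), ?_⟩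
  rw [map_pow, norm_eq, ← pow_mul, ← pow_mul, ← pow_add]
  congr 1
  conv_lhs => rw [← Nat.div_add_mod n (2 * Fintype.card K + 2)]
  ring

lemma eq_of_pow_eq_algebraMap_sq_mul_pow {i j : ℕ} (hi : i < 2 * Fintype.card K + 2)
    (hj : j < 2 * Fintype.card K + 2) {k : K} (hk : k ≠ 0) (h : ω ^ j = ι k ^ 2 * ω ^ i) :
    i = j := by
  have := Module.finite_of_finite K (M := L)
  have := Fintype.ofFinite L
  obtain ⟨m, hm⟩ := Nat.odd_iff.mpr (FiniteField.odd_card_of_char_ne_two h2)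
  have hm0 : 0 < m := by
    have : 1 < Fintype.card K := Fintype.one_lt_card
    lia
  have order : orderOf ω = (2 * Fintype.card K + 2) * m := by
    rw [orderOf_of_isPrim hω (ringChar_ne_two_of_algebra L h2),
      Module.card_eq_pow_finrank (K := K) (V := L),
      Algebra.IsQuadraticExtension.finrank_eq_two K L, hm]
    exact Nat.sub_eq_of_eq_add (by ring)
  have sq_pow : (ι k ^ 2) ^ m = 1 := by
    have := FiniteField.pow_card_sub_one_eq_one k hk
    rw [hm, Nat.add_sub_cancel] at this
    rw [← pow_mul, ← map_pow, this, map_one]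
  have pow_eq : ω ^ (i * m) = ω ^ (j * m) := by
    rw [pow_mul ω j, h, mul_pow, sq_pow, one_mul, pow_mul]
  refine Nat.eq_of_mul_eq_mul_right hm0 (pow_injOn_Iio_orderOf ?_ ?_ pow_eq) <;>
  · rw [order, Set.mem_Iio]
    gcongr

lemma subsingleton_zeroIndices_inter_squareIndices (a b : ℕ) :
    (zeroIndices K ω a ∩ squareIndices K ω b).Subsingleton := by
  rintro i ⟨⟨hi, hai⟩, -, hbi⟩ j ⟨⟨hj, haj⟩, -, hbj⟩
  have hω0 := ne_zero_of_isPrim hω (ringChar_ne_two_of_algebra L h2)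
  obtain ⟨k, hk⟩ := exists_eq_algebraMap_mul (pow_ne_zero _ hω0) hai haj
  have pow_eq : ω ^ j = ι k * ω ^ i := by
    rw [pow_add, pow_add, ← mul_assoc] at hk
    exact mul_right_cancel₀ (pow_ne_zero a hω0) hk
  rw [mem_sqSet_iff] at hbi hbj
  rw [pow_add, pow_eq, mul_assoc, ← pow_add, trace_algebraMap_mul, map_mul, hbi, mul_one,
    quadChar_eq_one_iff] at hbj
  obtain ⟨hk0, z, rfl⟩ := hbj
  exact eq_of_pow_eq_algebraMap_sq_mul_pow h2 hω hi hj (left_ne_zero_of_mul hk0)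
    (by rw [pow_eq, map_mul, sq])

lemma neg_one_pow_of_mem_zeroIndices {c i : ℕ} (hi : i ∈ zeroIndices K ω c) :
    (-1 : ℤ) ^ (i + c) = -(-1) ^ ((Fintype.card K - 1) / 2) := by
  have := Module.finite_of_finite K (M := L)
  have := Fintype.ofFinite L
  have hL := ringChar_ne_two_of_algebra L h2
  have h := quadChar_of_trace_eq_zero h2 (pow_ne_zero _ (ne_zero_of_isPrim hω hL)) hi.2
  rw [quadChar_pow_of_isPrim hω hL, quadChar_neg_one h2] at h
  exact_mod_cast h

/-- The parity condition decides on which side of the symmetric difference each of its at most two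
elements lies. -/
lemma eq_squareIndices_inter_of_signed_ncard {c : ℕ} (hc : Odd c) {A B : Set ℕ}
    (hA : A.Finite) (hB : B.Finite)
    (hinter : A ∩ B = squareIndices K ω 0 ∩ squareIndices K ω c)
    (hsymm : (A \ B) ∪ (B \ A) = (zeroIndices K ω 0 ∩ squareIndices K ω c) ∪
      (squareIndices K ω 0 ∩ zeroIndices K ω c))
    (hpar : ((A ∩ {i | Even i}).ncard : ℤ) + (B ∩ {i | Odd i}).ncard =
      ((A ∩ {i | Odd i}).ncard : ℤ) + (B ∩ {i | Even i}).ncard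
        - 2 * (-1) ^ ((Fintype.card K - 1) / 2)) :
    A = squareIndices K ω c ∩ (zeroIndices K ω 0 ∪ squareIndices K ω 0) ∧
      B = squareIndices K ω 0 ∩ (zeroIndices K ω c ∪ squareIndices K ω c) := by
  have hQ := subsingleton_zeroIndices_inter_squareIndices h2 hω c 0
  rw [Set.inter_comm] at hQ
  obtain ⟨hAB, hBA⟩ := sdiff_eq_of_signed_ncard hA hB
    (subsingleton_zeroIndices_inter_squareIndices h2 hω 0 c) hQ (neg_one_pow_eq_or ℤ _)
    (fun i hi ↦ neg_one_pow_of_mem_zeroIndices h2 hω hi.1)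
    (fun i hi ↦ by
      have := neg_one_pow_of_mem_zeroIndices h2 hω hi.2
      rw [pow_add, hc.neg_one_pow] at this
      linarith) hsymm hpar
  constructor
  · rw [← Set.sdiff_union_inter A B, hAB, hinter, Set.inter_union_distrib_left,
      Set.inter_comm (zeroIndices K ω 0), Set.inter_comm (squareIndices K ω 0)]
  · rw [← Set.sdiff_union_inter B A, hBA, Set.inter_comm B, hinter, Set.inter_union_distrib_left]

end Indices

section Union

variable {K L : Type} [Field K] [Fintype K] [Field L] [Fintype L] [Algebra K L]
  [Algebra.IsQuadraticExtension K L] (h2 : ringChar K ≠ 2) {ω : L} (hω : IsPrim L ω)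
include h2 hω

local notation "T" => Algebra.trace K L
local notation "ι" => algebraMap K L

/-- The set `{(x y, x y⁻¹ ωⁱ)}` is described by the class of the first coordinate and by the product
`x² ωⁱ` of the two coordinates, which up to nonzero squares of `K` is `ωⁱ`. -/
lemma setOf_exists_squareIndices_inter_eq (n a b : ℕ) :
    {w : L × L | ∃ x : K, x ≠ 0 ∧ ∃ y ∈ cyc L ω 2 n,
      ∃ i ∈ squareIndices K ω a ∩ (zeroIndices K ω b ∪ squareIndices K ω b),
        w = (ι x * y, ι x * y⁻¹ * ω ^ i)} =
    {w | η L w.1 = (-1) ^ n ∧ η K (T (ω ^ a * (w.1 * w.2))) = 1 ∧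
      η K (T (ω ^ b * (w.1 * w.2))) ≠ -1} := by
  simp only [mem_squareIndices_inter_iff, mem_cyc_two_iff hω (ringChar_ne_two_of_algebra L h2)]
  ext ⟨u, v⟩
  constructor
  · rintro ⟨x, hx, y, hy, i, ⟨-, hi⟩, h⟩
    obtain ⟨rfl, rfl⟩ := Prod.mk.inj h
    have hy0 := ne_zero_of_quadChar_eq_neg_one_pow hy
    have product : ι x * y * (ι x * y⁻¹ * ω ^ i) = ι x ^ 2 * ω ^ i := by field_simp
    refine ⟨by rw [map_mul, quadChar_algebraMap h2 hx, hy, one_mul], ?_⟩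
    simpa only [product, quadChar_trace_mul_algebraMap_sq_mul hx] using hi
  · rintro ⟨hu, ha, hb⟩
    have hu0 := ne_zero_of_quadChar_eq_neg_one_pow hu
    have huv : u * v ≠ 0 := by
      intro h
      simp [h] at ha
    obtain ⟨i, hi, x, hx, product⟩ := exists_eq_algebraMap_sq_mul_pow h2 hω huv
    have hx' : ι x ≠ 0 := by simpa
    simp only [product, quadChar_trace_mul_algebraMap_sq_mul hx] at ha hb
    refine ⟨x, hx, u / ι x, ?_, i, ⟨hi, ha, hb⟩, Prod.ext ?_ ?_⟩
    · rw [quadChar_div, quadChar_algebraMap h2 hx, mul_one, hu]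
    · field_simp
    · field_simp
      linear_combination product

lemma union_eq_modelSet (c : ℕ) :
    {w : L × L | ∃ y ∈ cyc L ω 2 (if Fintype.card K % 4 = 3 then 0 else 1), w = (0, y)} ∪
      {w | ∃ x : K, x ≠ 0 ∧ ∃ y ∈ cyc L ω 2 0,
        ∃ i ∈ squareIndices K ω c ∩ (zeroIndices K ω 0 ∪ squareIndices K ω 0),
          w = (ι x * y, ι x * y⁻¹ * ω ^ i)} ∪
      {w | ∃ x : K, x ≠ 0 ∧ ∃ y ∈ cyc L ω 2 1,
        ∃ i ∈ squareIndices K ω 0 ∩ (zeroIndices K ω c ∪ squareIndices K ω c),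
          w = (ι x * y, ι x * y⁻¹ * ω ^ i)} = modelSet K (ω ^ c) := by
  rw [setOf_exists_squareIndices_inter_eq h2 hω, setOf_exists_squareIndices_inter_eq h2 hω]
  ext ⟨u, v⟩
  simp [modelSet, mem_cyc_two_iff hω (ringChar_ne_two_of_algebra L h2),
    neg_quadChar_neg_one h2, or_assoc, and_comm]

end Union

end WilsonXiang

open WilsonXiang

/-- Theorem 4.1(1): `E₀ = D₀ ∪ D₂ ∪ D₃` is of type Q. -/
theorem wilson_xiang_E0_typeQ
    (p s q : ℕ) (hp : p.Prime) (hpodd : p ≠ 2) (hs : 0 < s) (hq : q = p ^ s)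
    (K L : Type) [Field K] [Fintype K] [Field L] [Fintype L] [Algebra K L] [CharP L p]
    (hK : Fintype.card K = q) (hL : Fintype.card L = q ^ 2)
    (ω : L) (hω : IsPrim L ω)
    (c : ℕ) (hc : c < 2 * q + 2) (hcodd : Odd c)
    (I₁ I₂ J₁ J₂ : Set ℕ)
    (hI₁ : I₁ = {i | i < 2 * q + 2 ∧ Algebra.trace K L (ω ^ i) = 0})
    (hI₂ : I₂ = {i | i < 2 * q + 2 ∧ Algebra.trace K L (ω ^ i) ∈ sqSet K})
    (hJ₁ : J₁ = {i | i < 2 * q + 2 ∧ Algebra.trace K L (ω ^ (i + c)) = 0})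
    (hJ₂ : J₂ = {i | i < 2 * q + 2 ∧ Algebra.trace K L (ω ^ (i + c)) ∈ sqSet K})
    (X₁c X₃c : Set ℕ)
    (hX₁c : X₁c = (I₁ ∩ J₂) ∪ (I₂ ∩ J₁)) (hX₃c : X₃c = I₂ ∩ J₂)
    (τ : ℕ) (hτ : τ = if q % 4 = 3 then 0 else 1)
    (A B : Set ℕ) (hA : ∀ i ∈ A, i < 2 * q + 2) (hB : ∀ i ∈ B, i < 2 * q + 2)
    (hAB : A ∩ B = X₃c) (hABsym : (A \ B) ∪ (B \ A) = X₁c)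
    (D₀ D₁ D₂ D₃ : Set (L × L))
    (hD₀ : D₀ = {w | ∃ y ∈ cyc L ω 2 τ, w = ((0 : L), y)})
    (hD₁ : D₁ = {w | ∃ y ∈ cyc L ω 2 0, w = (y, (0 : L))})
    (hD₂ : D₂ = {w | ∃ x : K, x ≠ 0 ∧ ∃ y ∈ cyc L ω 2 0, ∃ i ∈ A,
      w = (algebraMap K L x * y, algebraMap K L x * y⁻¹ * ω ^ i)})
    (hD₃ : D₃ = {w | ∃ x : K, x ≠ 0 ∧ ∃ y ∈ cyc L ω 2 1, ∃ i ∈ B,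
      w = (algebraMap K L x * y, algebraMap K L x * y⁻¹ * ω ^ i)})
    (hcardA : A.ncard = (q + 1) / 2) (hcardB : B.ncard = (q + 1) / 2)
    (hpar : ((A ∩ {i | Even i}).ncard : ℤ) + (B ∩ {i | Odd i}).ncard =
      ((A ∩ {i | Odd i}).ncard : ℤ) + (B ∩ {i | Even i}).ncard
        - 2 * (-1) ^ ((q - 1) / 2))
    : IsTypeQ p q L (D₀ ∪ D₂ ∪ D₃) := by
  subst hI₁ hI₂ hJ₁ hJ₂ hX₁c hX₃c hτ hD₀ hD₂ hD₃ hK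
  have quadratic : Algebra.IsQuadraticExtension K L :=
    { finrank_eq_two' := Nat.pow_right_injective Fintype.one_lt_card
        (Module.card_eq_pow_finrank.symm.trans hL) }
  have : CharP K p := (algebraMap K L).charP (algebraMap K L).injective p
  have h2 : ringChar K ≠ 2 := by rwa [ringChar.eq K p]
  have hg : quadChar L (ω ^ c) = -1 := by
    rw [quadChar_pow_of_isPrim hω (ringChar_ne_two_of_algebra L h2), hcodd.neg_one_pow]
  obtain ⟨rfl, rfl⟩ := eq_squareIndices_inter_of_signed_ncard h2 hω hcodd
    ((Set.finite_lt_nat _).subset hA) ((Set.finite_lt_nat _).subset hB) hAB hABsym hpar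
  rw [union_eq_modelSet h2 hω]
  exact isTypeQ_modelSet h2 hp hg

end
end

section
/- In the Wilson–Xiang setting, assume |A| = (q+3)/2, |B| = (q−1)/2 and |A_e| + |B_o| = |A_o| + |B_e|. Then E_1 = D_1 ∪ D_2 ∪ D_3 is a set of type Q in F_{q²} × F_{q²}. -/
noncomputable section

/-!
Let `η` be the quadratic character of `L`. Since `X_{1,c}` has at most two elements, the
cardinalities force `A = X_{1,c} ∪ X_{3,c}` and `B = X_{3,c}`. Membership of `(u, v)` in `E₁` then
depends only on `η u` and on the traces of `u * v` and `γ * (u * v)`, where `γ = ω ^ c` is a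
nonsquare of `L`: apart from terms on the axes, the indicator function of `E₁` is a combination of
products of quadratic characters and delta functions of these two traces, possibly times `η u`.
Expanding such a function of `t = u * v` in additive characters `ψ (k * t)` reduces its Fourier
transform to `∑ u, ∑ v, ψ (k * u * v + a * u + b * v) = |L| * ψ (-(a * b) / k)`. The transform
therefore has the same shape in `a * b` and `η b`, with `γ` replaced by its conjugate. At a nonzero
`a * b` the two traces do not vanish simultaneously, so only finitely many sign patterns are left,
each of which gives one of the two values; on the axis `b = 0` the signs come from `η a` and the
Gauss sum of `η`, whose square is `|L|`.
-/

namespace WilsonXiang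

open AddChar MulChar

/-- The indicator function of `{0}`, with complex values. -/
def delta {F : Type*} [Zero F] (x : F) : ℂ :=
  open Classical in if x = 0 then 1 else 0

@[simp]
lemma delta_zero {F : Type*} [Zero F] : delta (0 : F) = 1 := if_pos rfl

lemma delta_of_ne_zero {F : Type*} [Zero F] {x : F} (hx : x ≠ 0) : delta x = 0 := if_neg hx

lemma delta_mul {F : Type*} [MulZeroClass F] [NoZeroDivisors F] {x : F} (hx : x ≠ 0) (y : F) :
    delta (x * y) = delta y := by
  obtain rfl | hy := eq_or_ne y 0
  · rw [mul_zero]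
  · rw [delta_of_ne_zero (mul_ne_zero hx hy), delta_of_ne_zero hy]

section QuadraticCharacter

variable {F : Type*} [Field F] {χ : MulChar F ℂ}

lemma ne_zero_of_mulChar_eq_neg_one {x : F} (hx : χ x = -1) : x ≠ 0 := by
  rintro rfl
  simp at hx

lemma quadratic_eq_one_or_neg_one (hχ : χ.IsQuadratic) {x : F} (hx : x ≠ 0) :
    χ x = 1 ∨ χ x = -1 :=
  (hχ x).resolve_left ((Ne.isUnit hx).map χ).ne_zero

lemma eq_zero_or_quadratic_eq_one_or_neg_one (hχ : χ.IsQuadratic) (x : F) :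
    x = 0 ∨ x ≠ 0 ∧ (χ x = 1 ∨ χ x = -1) :=
  (eq_or_ne x 0).imp_right fun hx ↦ ⟨hx, quadratic_eq_one_or_neg_one hχ hx⟩

lemma quadratic_mul_self (hχ : χ.IsQuadratic) {x : F} (hx : x ≠ 0) : χ x * χ x = 1 := by
  rcases quadratic_eq_one_or_neg_one hχ hx with h | h <;> simp [h]

lemma quadratic_inv (hχ : χ.IsQuadratic) (x : F) : χ x⁻¹ = χ x := by
  rw [← MulChar.inv_apply', hχ.inv]

lemma quadratic_div (hχ : χ.IsQuadratic) (x y : F) : χ (x / y) = χ x * χ y := by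
  rw [div_eq_mul_inv, map_mul, quadratic_inv hχ]

lemma quadratic_neg_inv (hχ : χ.IsQuadratic) (x : F) : χ (-x⁻¹) = χ (-1) * χ x := by
  rw [neg_eq_neg_one_mul, map_mul, quadratic_inv hχ]

lemma quadratic_sum_eq_one_or_neg_three (hχ : χ.IsQuadratic) {x y : F} (hxy : x ≠ 0 ∨ y ≠ 0)
    {ε : ℂ} (hε : ε = 1 ∨ ε = -1) :
    χ (-1) * (χ x - χ y) + χ x * χ y +
        ε * (delta x - delta y + χ (-1) * (delta x * χ y + delta y * χ x)) = 1 ∨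
      χ (-1) * (χ x - χ y) + χ x * χ y +
        ε * (delta x - delta y + χ (-1) * (delta x * χ y + delta y * χ x)) = -3 := by
  have hχ' := eq_zero_or_quadratic_eq_one_or_neg_one hχ
  have hneg := quadratic_eq_one_or_neg_one hχ (neg_ne_zero.2 one_ne_zero)
  rcases hχ' x with rfl | ⟨hx, hx' | hx'⟩ <;> rcases hχ' y with rfl | ⟨hy, hy' | hy'⟩ <;>
    rcases hneg with h | h <;> rcases hε with rfl | rfl <;>
    simp at hxy <;> norm_num [*, delta_of_ne_zero]

variable [Fintype F]

lemma sum_neg_inv (f : F → ℂ) : ∑ x, f (-x⁻¹) = ∑ x, f x :=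
  Equiv.sum_comp ((Equiv.inv F).trans (Equiv.neg F)) f

lemma sum_delta_mul (f : F → ℂ) : ∑ x, delta x * f x = f 0 := by
  rw [Finset.sum_eq_single_of_mem (0 : F) (Finset.mem_univ _) fun x _ hx ↦ by
    rw [delta_of_ne_zero hx, zero_mul], delta_zero, one_mul]

lemma sum_delta : ∑ x : F, delta x = 1 := by
  simpa using sum_delta_mul (1 : F → ℂ)

lemma sum_addChar_mul_s14 {Ψ : AddChar F ℂ} (hΨ : Ψ ≠ 1) (x : F) :
    ∑ y, Ψ (y * x) = Fintype.card F * delta x := by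
  classical
  rw [AddChar.sum_mulShift x (AddChar.IsPrimitive.of_ne_one hΨ), delta]
  split_ifs <;> simp

lemma sum_mulChar_affine (hχ : χ ≠ 1) (A B : F) :
    ∑ y, χ (y * A + B) = Fintype.card F * (delta A * χ B) := by
  obtain rfl | hA := eq_or_ne A 0
  · simp
  · rw [delta_of_ne_zero hA, zero_mul, mul_zero, ← MulChar.sum_eq_zero_of_ne_one hχ]
    exact Equiv.sum_comp ((Equiv.mulRight₀ A hA).trans (Equiv.addRight B)) χ

lemma sum_quadratic_mul_delta_affine (hχ : χ.IsQuadratic) (hχ₁ : χ ≠ 1) (A B : F) :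
    ∑ y, χ y * delta (y * A + B) = χ (-1) * (χ A * χ B) := by
  obtain rfl | hA := eq_or_ne A 0
  · simp [← Finset.sum_mul, MulChar.sum_eq_zero_of_ne_one hχ₁]
  · rw [Finset.sum_eq_single_of_mem (-B / A) (Finset.mem_univ _) fun y _ hy ↦ ?_]
    · rw [div_mul_cancel₀ _ hA, neg_add_cancel, delta_zero, quadratic_div hχ,
        neg_eq_neg_one_mul, map_mul]
      ring
    · rw [delta_of_ne_zero, mul_zero]
      contrapose! hy
      rw [eq_div_iff hA, eq_neg_of_add_eq_zero_left hy]

lemma sum_quadratic_mul_addChar (hχ : χ.IsQuadratic) (hχ₁ : χ ≠ 1) (Ψ : AddChar F ℂ) (x : F) :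
    ∑ y, χ y * Ψ (y * x) = gaussSum χ Ψ * χ x := by
  obtain rfl | hx := eq_or_ne x 0
  · simp [MulChar.sum_eq_zero_of_ne_one hχ₁]
  · have h := gaussSum_mulShift_eq χ Ψ (Units.mk0 x hx)
    simp only [hχ.inv, gaussSum, mulShift_apply, Units.val_mk0] at h
    rw [mul_comm, gaussSum, ← h]
    simp only [mul_comm x]

lemma exists_quadratic_eq_one_iff_mem_sqSet {K : Type} [Field K] [Finite K]
    (hK : ringChar K ≠ 2) :
    ∃ χ : MulChar K ℂ, χ.IsQuadratic ∧ χ ≠ 1 ∧ ∀ x, x ∈ sqSet K ↔ χ x = 1 := by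
  classical
  cases nonempty_fintype K
  refine ⟨(quadraticChar K).ringHomComp (Int.castRingHom ℂ), (quadraticChar_isQuadratic K).comp _,
    (MulChar.ringHomComp_ne_one_iff (RingHom.injective_int _)).2 (quadraticChar_ne_one hK),
    fun x ↦ ?_⟩
  have h : x ∈ sqSet K ↔ x ≠ 0 ∧ IsSquare x := by
    simp only [sqSet, Set.mem_ofPred_eq, IsSquare, ← sq]
    constructor
    · rintro ⟨z, hz, rfl⟩
      exact ⟨pow_ne_zero 2 hz, z, rfl⟩
    · rintro ⟨hx, z, rfl⟩
      exact ⟨z, (pow_ne_zero_iff two_ne_zero).1 hx, rfl⟩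
  obtain rfl | hx := eq_or_ne x 0
  · simp [h]
  · rw [h, and_iff_right hx, ← quadraticChar_one_iff_isSquare hx, MulChar.ringHomComp_apply,
      Int.coe_castRingHom, Int.cast_eq_one]

end QuadraticCharacter

section HyperbolicSum

variable {L : Type*} [Field L] [Fintype L]

/-- The Fourier coefficient at `(a, b)` of the function `(u, v) ↦ w u * F (u * v)` on `L × L`, as a
linear function of `F`. -/
def hyperbolicSum (ψ : AddChar L ℂ) (w : L → ℂ) (a b : L) : (L → ℂ) →ₗ[ℂ] ℂ where
  toFun F := ∑ u, ∑ v, w u * F (u * v) * ψ (a * u + b * v)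
  map_add' F G := by simp only [Pi.add_apply, mul_add, add_mul, Finset.sum_add_distrib]
  map_smul' r F := by
    simp only [Pi.smul_apply, smul_eq_mul, Finset.mul_sum, RingHom.id_apply]
    exact Finset.sum_congr rfl fun u _ ↦ Finset.sum_congr rfl fun v _ ↦ by ring

lemma hyperbolicSum_apply (ψ : AddChar L ℂ) (w : L → ℂ) (a b : L) (F : L → ℂ) :
    hyperbolicSum ψ w a b F = ∑ u, ∑ v, w u * F (u * v) * ψ (a * u + b * v) := rfl

variable {ψ : AddChar L ℂ}

lemma hyperbolicSum_addChar (hψ : ψ ≠ 1) (w : L → ℂ) (a b : L) {k : L} (hk : k ≠ 0) :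
    hyperbolicSum ψ w a b (fun t ↦ ψ (k * t)) =
      Fintype.card L * (w (-b / k) * ψ (-(a * b) / k)) := by
  calc hyperbolicSum ψ w a b (fun t ↦ ψ (k * t))
      = ∑ u, w u * ψ (a * u) * ∑ v, ψ (v * (k * u + b)) := by
        rw [hyperbolicSum_apply]
        refine Finset.sum_congr rfl fun u _ ↦ ?_
        rw [Finset.mul_sum]
        refine Finset.sum_congr rfl fun v _ ↦ ?_
        rw [mul_assoc, mul_assoc, ← map_add_eq_mul, ← map_add_eq_mul]
        ring_nf
    _ = w (-b / k) * ψ (a * (-b / k)) * ∑ v, ψ (v * (k * (-b / k) + b)) := by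
        refine Finset.sum_eq_single_of_mem _ (Finset.mem_univ _) fun u _ hu ↦ ?_
        rw [sum_addChar_mul_s14 hψ, delta_of_ne_zero, mul_zero, mul_zero]
        contrapose! hu
        rw [eq_div_iff hk, mul_comm, eq_neg_of_add_eq_zero_left hu]
    _ = Fintype.card L * (w (-b / k) * ψ (-(a * b) / k)) := by
        rw [mul_div_cancel₀ _ hk, neg_add_cancel, sum_addChar_mul_s14 hψ, delta_zero, mul_one,
          mul_comm, mul_div_assoc', mul_neg]

lemma hyperbolicSum_one (hψ : ψ ≠ 1) (w : L → ℂ) (a b : L) :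
    hyperbolicSum ψ w a b 1 = Fintype.card L * (delta b * ∑ u, w u * ψ (a * u)) := by
  simp only [hyperbolicSum_apply, Pi.one_apply, mul_one, map_add_eq_mul, ← mul_assoc,
    ← Finset.mul_sum, ← Finset.sum_mul]
  simp only [mul_comm b, sum_addChar_mul_s14 hψ]
  ring

lemma sum_delta_axes (hψ : ψ ≠ 1) (a b : L) :
    ∑ u, ∑ v, (delta v - delta u - delta u * delta v) * ψ (a * u + b * v) =
      Fintype.card L * (delta a - delta b) - 1 := by
  have hinner : ∀ u, ∑ v, (delta v - delta u - delta u * delta v) * ψ (a * u + b * v) =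
      ψ (a * u) - delta u * ∑ v, ψ (a * u + b * v) - delta u * ψ (a * u) := fun u ↦ by
    simp only [sub_mul, Finset.sum_sub_distrib, mul_assoc, ← Finset.mul_sum, sum_delta_mul,
      mul_zero, add_zero]
  rw [Finset.sum_congr rfl fun u _ ↦ hinner u]
  simp only [Finset.sum_sub_distrib, sum_delta_mul, mul_zero, zero_add, map_zero_eq_one]
  simp only [mul_comm a, mul_comm b, sum_addChar_mul_s14 hψ]
  ring

end HyperbolicSum

section Lift

variable {K L : Type*} [Field K] [Field L] [Algebra K L]

lemma ne_zero_of_notMem_range {γ : L} (hγ : γ ∉ Set.range (algebraMap K L)) : γ ≠ 0 :=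
  fun h ↦ hγ ⟨0, by rw [h, map_zero]⟩

lemma smul_one_add_ne_zero {γ : L} (hγ : γ ∉ Set.range (algebraMap K L)) (y : K) :
    y • 1 + γ ≠ 0 := by
  refine fun h ↦ hγ ⟨-y, ?_⟩
  rw [map_neg, Algebra.algebraMap_eq_smul_one, eq_neg_of_add_eq_zero_right h]

lemma smul_add_one_ne_zero {γ : L} (hγ : γ ∉ Set.range (algebraMap K L)) (y : K) :
    y • γ + 1 ≠ 0 := by
  obtain rfl | hy := eq_or_ne y 0
  · simp
  · intro h
    refine smul_one_add_ne_zero hγ y⁻¹ ?_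
    rw [← inv_smul_smul₀ hy γ, ← smul_add, add_comm, h, smul_zero]

/-- The lift of an additive character of `K` to an extension `L`, by composition with the trace. -/
def traceLift (L : Type*) [Field L] [Algebra K L] (Ψ : AddChar K ℂ) : AddChar L ℂ :=
  Ψ.compAddMonoidHom (Algebra.trace K L).toAddMonoidHom

lemma traceLift_apply (Ψ : AddChar K ℂ) (z : L) : traceLift L Ψ z = Ψ (Algebra.trace K L z) := rfl

lemma traceLift_smul (Ψ : AddChar K ℂ) (k : K) (z : L) :
    traceLift L Ψ (k • z) = Ψ (k * Algebra.trace K L z) := by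
  rw [traceLift_apply, map_smul, smul_eq_mul]

lemma traceLift_ne_one [FiniteDimensional K L] [Algebra.IsSeparable K L] {Ψ : AddChar K ℂ}
    (hΨ : Ψ ≠ 1) : traceLift L Ψ ≠ 1 := by
  obtain ⟨x, hx⟩ := AddChar.ne_one_iff.1 hΨ
  obtain ⟨z, rfl⟩ := Algebra.trace_surjective K L x
  exact AddChar.ne_one_iff.2 ⟨z, hx⟩

/-- The lift of a multiplicative character of `K` to a finite extension `L`, by composition with the
norm. -/
def normLift (L : Type*) [Field L] [Algebra K L] [FiniteDimensional K L] (χ : MulChar K ℂ) :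
    MulChar L ℂ where
  toMonoidHom := χ.toMonoidHom.comp (Algebra.norm K)
  map_nonunit' z hz := by
    obtain rfl : z = 0 := by simpa using hz
    simp

section FiniteDimensional

variable [FiniteDimensional K L] {χ : MulChar K ℂ}

lemma normLift_apply (χ : MulChar K ℂ) (z : L) : normLift L χ z = χ (Algebra.norm K z) := rfl

lemma normLift_isQuadratic (hχ : χ.IsQuadratic) : (normLift L χ).IsQuadratic :=
  fun z ↦ hχ (Algebra.norm K z)

lemma normLift_ne_one [Finite L] (hχ₁ : χ ≠ 1) : normLift L χ ≠ 1 := by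
  obtain ⟨x, hx⟩ := MulChar.ne_one_iff.1 hχ₁
  obtain ⟨z, hz⟩ := FiniteField.unitsMap_norm_surjective K L x
  refine MulChar.ne_one_iff.2 ⟨z, ?_⟩
  rwa [normLift_apply, ← Units.coe_map, hz]

lemma normLift_smul (hχ : χ.IsQuadratic) (hKL : Even (Module.finrank K L)) {x : K} (hx : x ≠ 0)
    (u : L) : normLift L χ (x • u) = normLift L χ u := by
  obtain ⟨n, hn⟩ := hKL
  rw [normLift_apply, Algebra.smul_def, map_mul, Algebra.norm_algebraMap, hn, pow_add, map_mul,
    map_mul, quadratic_mul_self hχ (pow_ne_zero n hx), one_mul, normLift_apply]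

lemma normLift_neg (hχ : χ.IsQuadratic) (hKL : Even (Module.finrank K L)) (u : L) :
    normLift L χ (-u) = normLift L χ u := by
  rw [← normLift_smul hχ hKL (neg_ne_zero.2 one_ne_zero), neg_one_smul, neg_neg]

lemma gaussSum_normLift_sq [Fintype L] (hχ : χ.IsQuadratic) (hχ₁ : χ ≠ 1)
    (hKL : Even (Module.finrank K L)) {ψ : AddChar L ℂ} (hψ : ψ ≠ 1) :
    gaussSum (normLift L χ) ψ ^ 2 = Fintype.card L := by
  rw [gaussSum_sq (normLift_ne_one hχ₁) (normLift_isQuadratic hχ) (.of_ne_one hψ),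
    normLift_neg hχ hKL, map_one, one_mul]

lemma notMem_range_algebraMap_of_normLift_eq_neg_one (hχ : χ.IsQuadratic)
    (hKL : Even (Module.finrank K L)) {γ : L} (hγ : normLift L χ γ = -1) :
    γ ∉ Set.range (algebraMap K L) := by
  rintro ⟨x, rfl⟩
  have hx : x ≠ 0 := by
    simpa using ne_zero_of_mulChar_eq_neg_one hγ
  rw [Algebra.algebraMap_eq_smul_one, normLift_smul hχ hKL hx, map_one] at hγ
  norm_num at hγ

lemma exists_smul_eq_of_trace_eq_zero [Algebra.IsSeparable K L]
    (hKL : Module.finrank K L = 2) {z z' : L} (hz : z ≠ 0)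
    (hTr : Algebra.trace K L z = 0) (hTr' : Algebra.trace K L z' = 0) : ∃ c : K, c • z = z' := by
  have hker : Module.finrank K (Algebra.trace K L).ker = 1 := by
    have h := (Algebra.trace K L).finrank_range_add_finrank_ker
    rw [LinearMap.range_eq_top.2 (Algebra.trace_surjective K L), finrank_top,
      Module.finrank_self, hKL] at h
    lia
  obtain ⟨c, hc⟩ := (finrank_eq_one_iff_of_nonzero' (⟨z, hTr⟩ : (Algebra.trace K L).ker)
    fun h ↦ hz (congrArg Subtype.val h)).1 hker ⟨z', hTr'⟩
  exact ⟨c, congrArg Subtype.val hc⟩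

lemma eq_zero_of_trace_eq_zero_of_trace_mul_eq_zero [Algebra.IsSeparable K L]
    (hKL : Module.finrank K L = 2) {m β : L}
    (hβ : β ∉ Set.range (algebraMap K L)) (h : Algebra.trace K L m = 0)
    (h' : Algebra.trace K L (m * β) = 0) : m = 0 := by
  by_contra hm
  obtain ⟨c, hc⟩ := exists_smul_eq_of_trace_eq_zero hKL hm h h'
  refine hβ ⟨c, mul_left_cancel₀ hm ?_⟩
  rw [← hc, Algebra.smul_def, mul_comm]

end FiniteDimensional

lemma exists_psiL_eq_traceLift (p : ℕ) [Fact p.Prime] (K L : Type) [Field K] [Finite K] [Field L]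
    [Fintype L] [Algebra K L] [CharP L p] :
    ∃ Ψ : AddChar K ℂ, Ψ ≠ 1 ∧ ∀ z, psiL p L z = traceLift L Ψ z := by
  have : CharP K p := ((algebraMap K L).charP_iff (algebraMap K L).injective p).2 inferInstance
  let _ : Algebra (ZMod p) L := ZMod.algebra L p
  let _ : Algebra (ZMod p) K := ZMod.algebra K p
  have : IsScalarTower (ZMod p) K L := .of_algebraMap_eq' (Subsingleton.elim _ _)
  have hstd : (ZMod.stdAddChar : AddChar (ZMod p) ℂ) ≠ 1 := AddChar.ne_one_iff.2
    ⟨1, fun h ↦ one_ne_zero (ZMod.injective_stdAddChar (h.trans (AddChar.map_zero_eq_one _).symm))⟩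
  refine ⟨traceLift K (ZMod.stdAddChar (N := p)), traceLift_ne_one hstd, fun z ↦ ?_⟩
  rw [traceLift_apply, traceLift_apply, Algebra.trace_trace, ZMod.stdAddChar_apply,
    ZMod.toCircle_apply, psiL, zetaP, ← Complex.exp_nat_mul]
  congr 1
  ring

end Lift

section QuadraticExtension

variable {K L : Type*} [Field K] [Field L] [Algebra K L] {Ψ : AddChar K ℂ} {χ : MulChar K ℂ}

local notation "Tr" => Algebra.trace K L

local notation "σ" => FiniteField.frobeniusAlgHom K L

local notation "η" => normLift L χ

local notation "ψ" => traceLift L Ψ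

section Frobenius

variable [Fintype K]

lemma trace_mul_frobenius_smul_add (m α β : L) (y : K) :
    Tr (m * σ (y • α + β)) = y * Tr (m * σ α) + Tr (m * σ β) := by
  rw [map_add, map_smul, mul_add, map_add, mul_smul_comm, map_smul, smul_eq_mul]

lemma frobenius_notMem_range_algebraMap {γ : L} (hγ : γ ∉ Set.range (algebraMap K L)) :
    σ γ ∉ Set.range (algebraMap K L) := by
  rintro ⟨x, hx⟩
  rw [← (σ).commutes] at hx
  exact hγ ⟨x, (σ).injective hx⟩

lemma card_eq_card_sq_s14 [Fintype L] (hKL : Module.finrank K L = 2) :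
    (Fintype.card L : ℂ) = Fintype.card K ^ 2 := by
  rw [Module.card_eq_pow_finrank (K := K), hKL, Nat.cast_pow]

variable [Finite L]

lemma algebraMap_norm_eq_mul_frobenius (hKL : Module.finrank K L = 2) (z : L) :
    algebraMap K L (Algebra.norm K z) = z * σ z := by
  rw [FiniteField.algebraMap_norm_eq_prod_pow, hKL, Nat.card_eq_fintype_card]
  simp [Finset.prod_range_succ]

lemma norm_mul_trace_div_s14 (hKL : Module.finrank K L = 2) (m : L) {z : L} (hz : z ≠ 0) :
    Algebra.norm K z * Tr (m / z) = Tr (m * σ z) := by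
  rw [← smul_eq_mul, ← map_smul, Algebra.smul_def, algebraMap_norm_eq_mul_frobenius hKL]
  congr 1
  field_simp

lemma quadratic_trace_div (hKL : Module.finrank K L = 2) (hχ : χ.IsQuadratic)
    (m z : L) : χ (Tr (m / z)) = η z * χ (Tr (m * σ z)) := by
  obtain rfl | hz := eq_or_ne z 0
  · simp
  · rw [← norm_mul_trace_div_s14 hKL m hz, map_mul, ← normLift_apply, ← mul_assoc,
      quadratic_mul_self (normLift_isQuadratic hχ) hz, one_mul]

lemma delta_trace_div (hKL : Module.finrank K L = 2) (m : L) {z : L} (hz : z ≠ 0) :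
    delta (Tr (m / z)) = delta (Tr (m * σ z)) := by
  rw [← norm_mul_trace_div_s14 hKL m hz, delta_mul (Algebra.norm_ne_zero_iff.2 hz)]

end Frobenius

section InvariantWeight

variable [Fintype L]

section

variable [Finite K]

lemma hyperbolicSum_traceLift_smul (hΨ : Ψ ≠ 1) {w : L → ℂ}
    (hw : ∀ x : K, x ≠ 0 → ∀ u, w (x • u) = w u) (a b : L) {α : L} (hα : α ≠ 0) {k : K}
    (hk : k ≠ 0) :
    hyperbolicSum ψ w a b (fun t ↦ Ψ (k * Tr (α * t))) =
      Fintype.card L * (w (b / α) * Ψ (-k⁻¹ * Tr (a * b / α))) := by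
  have hinv : ∀ z : L, -z / (k • α) = (-k⁻¹) • (z / α) := fun z ↦ by
    rw [neg_smul, neg_div, div_eq_mul_inv, div_eq_mul_inv, smul_inv₀, mul_smul_comm]
  simp only [← traceLift_smul, ← smul_mul_assoc]
  rw [hyperbolicSum_addChar (traceLift_ne_one hΨ) w a b (smul_ne_zero hk hα), hinv, hinv,
    hw _ (neg_ne_zero.2 (inv_ne_zero hk))]

lemma hyperbolicSum_quadratic_trace (hχ : χ.IsQuadratic) (hχ₁ : χ ≠ 1) (hΨ : Ψ ≠ 1) {w : L → ℂ}
    (hw : ∀ x : K, x ≠ 0 → ∀ u, w (x • u) = w u) (a b : L) {α : L} (hα : α ≠ 0) :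
    hyperbolicSum ψ w a b (fun t ↦ χ (Tr (α * t))) =
      Fintype.card L * (χ (-1) * (w (b / α) * χ (Tr (a * b / α)))) := by
  cases nonempty_fintype K
  have hG : gaussSum χ Ψ ≠ 0 :=
    gaussSum_ne_zero_of_nontrivial (by simp) hχ₁ (.of_ne_one hΨ)
  have hexp : gaussSum χ Ψ • (fun t ↦ χ (Tr (α * t))) =
      ∑ k, χ k • fun t ↦ Ψ (k * Tr (α * t)) := by
    ext t
    simp [sum_quadratic_mul_addChar hχ hχ₁]
  have hterm : ∀ k : K,
      χ k * hyperbolicSum ψ w a b (fun t ↦ Ψ (k * Tr (α * t))) =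
      Fintype.card L * (χ (-1) * w (b / α)) * (χ (-k⁻¹) * Ψ (-k⁻¹ * Tr (a * b / α))) := by
    intro k
    obtain rfl | hk := eq_or_ne k 0
    · simp
    · rw [hyperbolicSum_traceLift_smul hΨ hw a b hα hk, quadratic_neg_inv hχ]
      linear_combination (-(χ k * Fintype.card L * w (b / α) * Ψ (-k⁻¹ * Tr (a * b / α)))) *
        quadratic_mul_self hχ (neg_ne_zero.2 (one_ne_zero (α := K)))
  have hswap : ∑ k, χ (-k⁻¹) * Ψ (-k⁻¹ * Tr (a * b / α)) = ∑ k, χ k * Ψ (k * Tr (a * b / α)) :=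
    sum_neg_inv fun k ↦ χ k * Ψ (k * Tr (a * b / α))
  refine mul_left_cancel₀ hG ?_
  rw [← smul_eq_mul, ← map_smul, hexp, map_sum]
  simp only [map_smul, smul_eq_mul, hterm, ← Finset.mul_sum]
  rw [hswap, sum_quadratic_mul_addChar hχ hχ₁]
  ring

lemma hyperbolicSum_one_one (hΨ : Ψ ≠ 1) (a b : L) :
    hyperbolicSum ψ 1 a b 1 = Fintype.card L ^ 2 * (delta a * delta b) := by
  rw [hyperbolicSum_one (traceLift_ne_one hΨ)]
  simp only [Pi.one_apply, one_mul, mul_comm a, sum_addChar_mul_s14 (traceLift_ne_one hΨ)]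
  ring

end

variable [Fintype K]

lemma hyperbolicSum_delta_trace (hΨ : Ψ ≠ 1) {w : L → ℂ}
    (hw : ∀ x : K, x ≠ 0 → ∀ u, w (x • u) = w u) (a b : L) {α : L} (hα : α ≠ 0) :
    Fintype.card K * hyperbolicSum ψ w a b (fun t ↦ delta (Tr (α * t))) =
      Fintype.card L * (w (b / α) * (Fintype.card K * delta (Tr (a * b / α)) - 1) +
        delta b * ∑ u, w u * ψ (a * u)) := by
  have hexp : (Fintype.card K : ℂ) • (fun t ↦ delta (Tr (α * t))) =
      ∑ k, fun t ↦ Ψ (k * Tr (α * t)) := by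
    ext t
    simp [sum_addChar_mul_s14 hΨ]
  have hterm : ∀ k : K, hyperbolicSum ψ w a b (fun t ↦ Ψ (k * Tr (α * t))) =
      Fintype.card L * (w (b / α) * Ψ (-k⁻¹ * Tr (a * b / α)) +
        delta k * (delta b * ∑ u, w u * ψ (a * u) - w (b / α))) := by
    intro k
    obtain rfl | hk := eq_or_ne k 0
    · have hone : (fun t ↦ Ψ (0 * Tr (α * t))) = 1 := by ext t; simp
      rw [hone, hyperbolicSum_one (traceLift_ne_one hΨ)]
      simp
    · rw [hyperbolicSum_traceLift_smul hΨ hw a b hα hk, delta_of_ne_zero hk, zero_mul, add_zero]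
  have hswap : ∑ k, Ψ (-k⁻¹ * Tr (a * b / α)) = ∑ k, Ψ (k * Tr (a * b / α)) :=
    sum_neg_inv fun k ↦ Ψ (k * Tr (a * b / α))
  rw [← smul_eq_mul, ← map_smul, hexp, map_sum]
  simp only [hterm, ← Finset.mul_sum, Finset.sum_add_distrib, ← Finset.sum_mul]
  rw [hswap, sum_addChar_mul_s14 hΨ, sum_delta]
  ring

lemma hyperbolicSum_one_quadratic_trace (hKL : Module.finrank K L = 2) (hχ : χ.IsQuadratic)
    (hχ₁ : χ ≠ 1) (hΨ : Ψ ≠ 1) (a b : L) {α : L} (hα : α ≠ 0) :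
    hyperbolicSum ψ 1 a b (fun t ↦ χ (Tr (α * t))) =
      Fintype.card L * (χ (-1) * (η α * χ (Tr (a * b * σ α)))) := by
  rw [hyperbolicSum_quadratic_trace hχ hχ₁ hΨ (fun _ _ _ ↦ rfl) a b hα, Pi.one_apply, one_mul,
    quadratic_trace_div hKL hχ]

lemma hyperbolicSum_one_quadratic_trace_mul (hKL : Module.finrank K L = 2) (hχ : χ.IsQuadratic)
    (hχ₁ : χ ≠ 1) (hΨ : Ψ ≠ 1) (a b : L) {α β : L} (hαβ : ∀ y : K, y • α + β ≠ 0) :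
    hyperbolicSum ψ 1 a b (fun t ↦ χ (Tr (α * t)) * χ (Tr (β * t))) =
      Fintype.card L * (χ (Tr (a * b * σ α)) * χ (Tr (a * b * σ β))) := by
  have hκ : χ (-1) * χ (-1) = 1 := quadratic_mul_self hχ (neg_ne_zero.2 one_ne_zero)
  have hexp : (fun t ↦ χ (Tr (α * t)) * χ (Tr (β * t))) =
      χ (-1) • ∑ y : K, χ y • fun t ↦ delta (Tr ((y • α + β) * t)) := by
    ext t
    simp [add_mul, sum_quadratic_mul_delta_affine hχ hχ₁, ← mul_assoc, hκ]
  have hterm : ∀ y : K, Fintype.card K *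
      (χ y * hyperbolicSum ψ 1 a b (fun t ↦ delta (Tr ((y • α + β) * t)))) =
      Fintype.card K * Fintype.card L *
        (χ y * delta (y * Tr (a * b * σ α) + Tr (a * b * σ β))) +
      χ y * (Fintype.card L * (delta b * ∑ u, ψ (a * u) - 1)) := by
    intro y
    have h := hyperbolicSum_delta_trace hΨ (fun _ _ _ ↦ rfl : ∀ x : K, x ≠ 0 → ∀ u : L,
      (1 : L → ℂ) (x • u) = (1 : L → ℂ) u) a b (hαβ y)
    rw [delta_trace_div hKL _ (hαβ y), trace_mul_frobenius_smul_add] at h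
    simp only [Pi.one_apply, one_mul] at h
    linear_combination χ y * h
  refine mul_left_cancel₀ (Nat.cast_ne_zero.2 (Fintype.card_ne_zero (α := K))) ?_
  rw [hexp, map_smul, map_sum]
  simp only [map_smul, smul_eq_mul]
  rw [mul_left_comm, Finset.mul_sum, Finset.sum_congr rfl fun y _ ↦ hterm y,
    Finset.sum_add_distrib, ← Finset.sum_mul, MulChar.sum_eq_zero_of_ne_one hχ₁,
    ← Finset.mul_sum, sum_quadratic_mul_delta_affine hχ hχ₁]
  linear_combination Fintype.card K * Fintype.card L * χ (Tr (a * b * σ α)) *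
    χ (Tr (a * b * σ β)) * hκ

lemma hyperbolicSum_normLift_delta_trace (hKL : Module.finrank K L = 2) (hχ : χ.IsQuadratic)
    (hχ₁ : χ ≠ 1) (hΨ : Ψ ≠ 1) (a b : L) {α : L} (hα : α ≠ 0) :
    hyperbolicSum ψ η a b (fun t ↦ delta (Tr (α * t))) =
      Fintype.card K * (η b * η α * (Fintype.card K * delta (Tr (a * b * σ α)) - 1) +
        delta b * (gaussSum η ψ * η a)) := by
  have h := hyperbolicSum_delta_trace hΨ
    (fun x hx ↦ normLift_smul hχ (hKL ▸ even_two) hx : ∀ x : K, x ≠ 0 → ∀ u, η (x • u) = η u)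
    a b hα
  refine mul_left_cancel₀ (Nat.cast_ne_zero.2 (Fintype.card_ne_zero (α := K))) ?_
  simp only [mul_comm a] at h
  rw [sum_quadratic_mul_addChar (normLift_isQuadratic hχ) (normLift_ne_one hχ₁),
    quadratic_div (normLift_isQuadratic hχ), delta_trace_div hKL _ hα, card_eq_card_sq_s14 hKL,
    mul_comm b] at h
  rw [h]
  ring

lemma hyperbolicSum_normLift_delta_mul_quadratic_trace (hKL : Module.finrank K L = 2)
    (hχ : χ.IsQuadratic) (hχ₁ : χ ≠ 1) (hΨ : Ψ ≠ 1) (a b : L) {α β : L}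
    (hαβ : ∀ y : K, y • α + β ≠ 0) :
    hyperbolicSum ψ η a b (fun t ↦ delta (Tr (α * t)) * χ (Tr (β * t))) =
      Fintype.card L * (χ (-1) * (η b *
        (delta (Tr (a * b * σ α)) * χ (Tr (a * b * σ β))))) := by
  have hexp : (Fintype.card K : ℂ) • (fun t ↦ delta (Tr (α * t)) * χ (Tr (β * t))) =
      ∑ y : K, fun t ↦ χ (Tr ((y • α + β) * t)) := by
    ext t
    simp [add_mul, sum_mulChar_affine hχ₁]
  have hterm : ∀ y : K, hyperbolicSum ψ η a b (fun t ↦ χ (Tr ((y • α + β) * t))) =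
      Fintype.card L * (χ (-1) * η b) * χ (y * Tr (a * b * σ α) + Tr (a * b * σ β)) := by
    intro y
    rw [hyperbolicSum_quadratic_trace hχ hχ₁ hΨ
      (fun x hx ↦ normLift_smul hχ (hKL ▸ even_two) hx) a b (hαβ y),
      quadratic_div (normLift_isQuadratic hχ), quadratic_trace_div hKL hχ,
      trace_mul_frobenius_smul_add]
    linear_combination Fintype.card L * χ (-1) * η b *
      χ (y * Tr (a * b * σ α) + Tr (a * b * σ β)) *
      quadratic_mul_self (normLift_isQuadratic hχ) (hαβ y)
  refine mul_left_cancel₀ (Nat.cast_ne_zero.2 (Fintype.card_ne_zero (α := K))) ?_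
  rw [← smul_eq_mul, ← map_smul, hexp, map_sum, Finset.sum_congr rfl fun y _ ↦ hterm y,
    ← Finset.mul_sum, sum_mulChar_affine hχ₁]
  ring

end InvariantWeight

section WilsonXiangSet

/-- The elements `t` for which the traces of `t` and `γ * t` are nonzero squares, as detected by the
quadratic character `χ`. With `γ = ω ^ c` these `t = ω ^ i` are the ones with `i ∈ X_{3,c}`. -/
def squareTraceSet (χ : MulChar K ℂ) (γ : L) : Set L :=
  {t | χ (Tr t) = 1 ∧ χ (Tr (γ * t)) = 1}

/-- The elements `t` for which one of the traces of `t` and `γ * t` vanishes and the other one is a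
nonzero square. With `γ = ω ^ c` these `t = ω ^ i` are the ones with `i ∈ X_{1,c}`. -/
def mixedTraceSet (χ : MulChar K ℂ) (γ : L) : Set L :=
  {t | Tr t = 0 ∧ χ (Tr (γ * t)) = 1 ∨ χ (Tr t) = 1 ∧ Tr (γ * t) = 0}

/-- A set `T` is stable under the nonzero squares of `K` if multiplying by them preserves it. Such
sets of nonzero elements are determined by the exponents of `ω` below `2 * (q + 1)`. -/
def IsSquareStable (K : Type*) {L : Type*} [Field K] [Field L] [Algebra K L] (T : Set L) : Prop :=
  ∀ ⦃x : K⦄ ⦃t : L⦄, x ≠ 0 → t ∈ T → x ^ 2 • t ∈ T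

lemma isSquareStable_mixedTraceSet (hχ : χ.IsQuadratic) (γ : L) :
    IsSquareStable K (mixedTraceSet χ γ) := by
  intro x t hx ht
  have hsq : χ x ^ 2 = 1 := by rw [sq, quadratic_mul_self hχ hx]
  simpa [mixedTraceSet, hx, hsq] using ht

lemma isSquareStable_squareTraceSet (hχ : χ.IsQuadratic) (γ : L) :
    IsSquareStable K (squareTraceSet χ γ) := by
  intro x t hx ht
  have hsq : χ x ^ 2 = 1 := by rw [sq, quadratic_mul_self hχ hx]
  simpa [squareTraceSet, hsq] using ht

lemma zero_notMem_mixedTraceSet (γ : L) : 0 ∉ mixedTraceSet χ γ := by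
  simp [mixedTraceSet]

lemma zero_notMem_squareTraceSet (γ : L) : 0 ∉ squareTraceSet χ γ := by
  simp [squareTraceSet]

/-- The set `E₁ = D₁ ∪ D₂ ∪ D₃` in coordinates that do not refer to a primitive element: whether
`(u, v)` belongs to it is read off from the quadratic character of `u` and from `u * v`. -/
def wilsonXiangSet [FiniteDimensional K L] (χ : MulChar K ℂ) (γ : L) : Set (L × L) :=
  {z | normLift L χ z.1 = 1 ∧ (z.2 = 0 ∨ z.1 * z.2 ∈ mixedTraceSet χ γ ∪ squareTraceSet χ γ) ∨
    normLift L χ z.1 = -1 ∧ z.1 * z.2 ∈ squareTraceSet χ γ}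

variable [FiniteDimensional K L]

lemma trace_ne_zero_or_trace_mul_ne_zero_s14 [Algebra.IsSeparable K L]
    (hKL : Module.finrank K L = 2) {γ : L} (hγ : γ ∉ Set.range (algebraMap K L)) {t : L}
    (ht : t ≠ 0) : Tr t ≠ 0 ∨ Tr (γ * t) ≠ 0 := by
  by_contra! h
  exact ht (eq_zero_of_trace_eq_zero_of_trace_mul_eq_zero hKL hγ h.1 (mul_comm γ t ▸ h.2))

lemma four_mul_indicator_wilsonXiangSet [Algebra.IsSeparable K L] (hKL : Module.finrank K L = 2)
    (hχ : χ.IsQuadratic) {γ : L} (hγ : γ ∉ Set.range (algebraMap K L)) (u v : L) :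
    4 * (wilsonXiangSet χ γ).indicator 1 (u, v) =
      (1 + χ (Tr (u * v))) * (1 + χ (Tr (γ * (u * v)))) +
      η u * (delta (Tr (u * v)) * (1 + χ (Tr (γ * (u * v)))) +
        delta (Tr (γ * (u * v))) * (1 + χ (Tr (u * v)))) +
      delta v - delta u - delta u * delta v := by
  classical
  rw [Set.indicator_apply]
  simp only [wilsonXiangSet, mixedTraceSet, squareTraceSet, Set.mem_ofPred_eq, Set.mem_union,
    Pi.one_apply]
  obtain rfl | hu := eq_or_ne u 0
  · norm_num
  have hη := quadratic_eq_one_or_neg_one (normLift_isQuadratic (L := L) hχ) hu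
  obtain rfl | hv := eq_or_ne v 0
  · rcases hη with h | h <;> norm_num [h, delta_of_ne_zero hu]
  have htr := trace_ne_zero_or_trace_mul_ne_zero_s14 hKL hγ (mul_ne_zero hu hv)
  generalize Tr (u * v) = x at htr ⊢
  generalize Tr (γ * (u * v)) = y at htr ⊢
  have hχ' := eq_zero_or_quadratic_eq_one_or_neg_one hχ
  rcases hχ' x with rfl | ⟨hx, hx' | hx'⟩ <;> rcases hχ' y with rfl | ⟨hy, hy' | hy'⟩ <;>
    rcases hη with h | h <;> simp at htr <;> norm_num [*, delta_of_ne_zero]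

section Fourier

variable [Fintype K] [Fintype L] {γ : L}

lemma hyperbolicSum_one_square_trace (hKL : Module.finrank K L = 2) (hχ : χ.IsQuadratic)
    (hχ₁ : χ ≠ 1) (hΨ : Ψ ≠ 1) (hγ : η γ = -1) (a b : L) :
    hyperbolicSum ψ 1 a b (fun t ↦ (1 + χ (Tr t)) * (1 + χ (Tr (γ * t)))) =
      Fintype.card L ^ 2 * (delta a * delta b) +
      Fintype.card L * (χ (-1) * (χ (Tr (a * b)) - χ (Tr (a * b * σ γ))) +
        χ (Tr (a * b)) * χ (Tr (a * b * σ γ))) := by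
  have hγ' := notMem_range_algebraMap_of_normLift_eq_neg_one hχ (hKL ▸ even_two) hγ
  have hexp : (fun t ↦ (1 + χ (Tr t)) * (1 + χ (Tr (γ * t)))) =
      1 + (fun t ↦ χ (Tr (1 * t))) + (fun t ↦ χ (Tr (γ * t))) +
        fun t ↦ χ (Tr (1 * t)) * χ (Tr (γ * t)) := by
    ext t
    simp only [Pi.add_apply, Pi.one_apply, one_mul]
    ring
  rw [hexp, map_add, map_add, map_add, hyperbolicSum_one_one hΨ,
    hyperbolicSum_one_quadratic_trace hKL hχ hχ₁ hΨ a b one_ne_zero,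
    hyperbolicSum_one_quadratic_trace hKL hχ hχ₁ hΨ a b (ne_zero_of_notMem_range hγ'),
    hyperbolicSum_one_quadratic_trace_mul hKL hχ hχ₁ hΨ a b (smul_one_add_ne_zero hγ'), hγ,
    map_one, map_one, mul_one]
  ring

lemma hyperbolicSum_normLift_mixed_trace (hKL : Module.finrank K L = 2) (hχ : χ.IsQuadratic)
    (hχ₁ : χ ≠ 1) (hΨ : Ψ ≠ 1) (hγ : η γ = -1) (a b : L) :
    hyperbolicSum ψ η a b (fun t ↦ delta (Tr t) * (1 + χ (Tr (γ * t))) +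
      delta (Tr (γ * t)) * (1 + χ (Tr t))) =
      Fintype.card L * (η b * (delta (Tr (a * b)) - delta (Tr (a * b * σ γ)) +
        χ (-1) * (delta (Tr (a * b)) * χ (Tr (a * b * σ γ)) +
          delta (Tr (a * b * σ γ)) * χ (Tr (a * b))))) +
      2 * Fintype.card K * (delta b * (gaussSum η ψ * η a)) := by
  have hγ' := notMem_range_algebraMap_of_normLift_eq_neg_one hχ (hKL ▸ even_two) hγ
  have hexp : (fun t ↦ delta (Tr t) * (1 + χ (Tr (γ * t))) +
      delta (Tr (γ * t)) * (1 + χ (Tr t))) =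
      (fun t ↦ delta (Tr (1 * t))) + (fun t ↦ delta (Tr (γ * t))) +
        (fun t ↦ delta (Tr (1 * t)) * χ (Tr (γ * t))) +
        fun t ↦ delta (Tr (γ * t)) * χ (Tr (1 * t)) := by
    ext t
    simp only [Pi.add_apply, one_mul]
    ring
  rw [hexp, map_add, map_add, map_add,
    hyperbolicSum_normLift_delta_trace hKL hχ hχ₁ hΨ a b one_ne_zero,
    hyperbolicSum_normLift_delta_trace hKL hχ hχ₁ hΨ a b (ne_zero_of_notMem_range hγ'),
    hyperbolicSum_normLift_delta_mul_quadratic_trace hKL hχ hχ₁ hΨ a b (smul_one_add_ne_zero hγ'),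
    hyperbolicSum_normLift_delta_mul_quadratic_trace hKL hχ hχ₁ hΨ a b (smul_add_one_ne_zero hγ'),
    hγ, map_one, map_one, mul_one, mul_one, card_eq_card_sq_s14 hKL]
  ring

lemma four_mul_sum_indicator_wilsonXiangSet (hKL : Module.finrank K L = 2) (hχ : χ.IsQuadratic)
    (hχ₁ : χ ≠ 1) (hΨ : Ψ ≠ 1) (hγ : η γ = -1) (a b : L) :
    4 * ∑ u, ∑ v, (wilsonXiangSet χ γ).indicator 1 (u, v) * ψ (a * u + b * v) =
      Fintype.card L ^ 2 * (delta a * delta b) +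
      Fintype.card L * (χ (-1) * (χ (Tr (a * b)) - χ (Tr (a * b * σ γ))) +
        χ (Tr (a * b)) * χ (Tr (a * b * σ γ)) +
        η b * (delta (Tr (a * b)) - delta (Tr (a * b * σ γ)) +
          χ (-1) * (delta (Tr (a * b)) * χ (Tr (a * b * σ γ)) +
            delta (Tr (a * b * σ γ)) * χ (Tr (a * b)))) +
        delta a - delta b) +
      2 * Fintype.card K * (delta b * (gaussSum η ψ * η a)) - 1 := by
  have hγ' := notMem_range_algebraMap_of_normLift_eq_neg_one hχ (hKL ▸ even_two) hγ
  have hsplit : 4 * ∑ u, ∑ v, (wilsonXiangSet χ γ).indicator 1 (u, v) * ψ (a * u + b * v) =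
      hyperbolicSum ψ 1 a b (fun t ↦ (1 + χ (Tr t)) * (1 + χ (Tr (γ * t)))) +
      hyperbolicSum ψ η a b (fun t ↦ delta (Tr t) * (1 + χ (Tr (γ * t))) +
        delta (Tr (γ * t)) * (1 + χ (Tr t))) +
      ∑ u, ∑ v, (delta v - delta u - delta u * delta v) * ψ (a * u + b * v) := by
    simp only [hyperbolicSum_apply, Finset.mul_sum, ← Finset.sum_add_distrib, ← mul_assoc,
      four_mul_indicator_wilsonXiangSet hKL hχ hγ']
    refine Finset.sum_congr rfl fun u _ ↦ Finset.sum_congr rfl fun v _ ↦ ?_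
    rw [Pi.one_apply]
    ring_nf
  rw [hsplit, hyperbolicSum_one_square_trace hKL hχ hχ₁ hΨ hγ,
    hyperbolicSum_normLift_mixed_trace hKL hχ hχ₁ hΨ hγ, sum_delta_axes (traceLift_ne_one hΨ)]
  ring

lemma four_mul_sum_indicator_wilsonXiangSet_zero (hKL : Module.finrank K L = 2)
    (hχ : χ.IsQuadratic) (hχ₁ : χ ≠ 1) (hΨ : Ψ ≠ 1) (hγ : η γ = -1) :
    4 * ∑ u, ∑ v, (wilsonXiangSet χ γ).indicator 1 (u, v) * ψ (0 * u + 0 * v) =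
      (Fintype.card K : ℂ) ^ 4 - 1 := by
  rw [four_mul_sum_indicator_wilsonXiangSet hKL hχ hχ₁ hΨ hγ, card_eq_card_sq_s14 hKL]
  simp [← pow_mul]

lemma four_mul_sum_indicator_wilsonXiangSet_eq_or (hKL : Module.finrank K L = 2)
    (hχ : χ.IsQuadratic) (hχ₁ : χ ≠ 1) (hΨ : Ψ ≠ 1) (hγ : η γ = -1) {a b : L}
    (hab : (a, b) ≠ (0, 0)) :
    4 * ∑ u, ∑ v, (wilsonXiangSet χ γ).indicator 1 (u, v) * ψ (a * u + b * v) =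
      (Fintype.card K : ℂ) ^ 2 - 1 ∨
    4 * ∑ u, ∑ v, (wilsonXiangSet χ γ).indicator 1 (u, v) * ψ (a * u + b * v) =
      -3 * (Fintype.card K : ℂ) ^ 2 - 1 := by
  have hη := normLift_isQuadratic (L := L) hχ
  have hγ' := notMem_range_algebraMap_of_normLift_eq_neg_one hχ (hKL ▸ even_two) hγ
  rw [four_mul_sum_indicator_wilsonXiangSet hKL hχ hχ₁ hΨ hγ, card_eq_card_sq_s14 hKL]
  obtain rfl | ha := eq_or_ne a 0
  · have hb : b ≠ 0 := fun hb ↦ hab (by rw [hb])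
    left
    simp [delta_of_ne_zero hb]
  obtain rfl | hb := eq_or_ne b 0
  · have hG : gaussSum η ψ = Fintype.card K ∨ gaussSum η ψ = -Fintype.card K :=
      sq_eq_sq_iff_eq_or_eq_neg.1 ((gaussSum_normLift_sq hχ hχ₁ (hKL ▸ even_two)
        (traceLift_ne_one hΨ)).trans (card_eq_card_sq_s14 hKL))
    rcases hG with h | h <;> rcases quadratic_eq_one_or_neg_one hη ha with h' | h' <;>
      simp [h, h', delta_of_ne_zero ha] <;> ring_nf <;> simp
  have htr : Tr (a * b) ≠ 0 ∨ Tr (a * b * σ γ) ≠ 0 := by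
    by_contra! h
    exact mul_ne_zero ha hb (eq_zero_of_trace_eq_zero_of_trace_mul_eq_zero hKL
      (frobenius_notMem_range_algebraMap hγ') h.1 h.2)
  rw [delta_of_ne_zero ha, delta_of_ne_zero hb, add_zero, sub_zero]
  rcases quadratic_sum_eq_one_or_neg_three hχ htr (quadratic_eq_one_or_neg_one hη hb)
    with h | h <;> rw [h]
  · left
    ring
  · right
    ring

end Fourier

end WilsonXiangSet

end QuadraticExtension

section TypeQ

variable (p : ℕ) {K L : Type} [Field K] [Field L] [Fintype L] [CharP L p]

lemma psiSum_eq_sum_indicator (a b : L) (E : Set (L × L)) :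
    psiSum p L a b E = ∑ u, ∑ v, E.indicator 1 (u, v) * psiL p L (a * u + b * v) := by
  classical
  rw [psiSum, finsum_mem_def, finsum_eq_sum_of_fintype, Fintype.sum_prod_type]
  simp only [Set.indicator_apply, Pi.one_apply, ite_mul, one_mul, zero_mul]

lemma psiSum_zero_zero (E : Set (L × L)) : psiSum p L 0 0 E = E.ncard := by
  classical
  simp [psiSum, psiL, finsum_mem_eq_finite_toFinset_sum _ E.toFinite, Set.ncard_eq_toFinset_card E]

lemma isTypeQ_wilsonXiangSet [Fact p.Prime] [Fintype K] [Algebra K L]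
    (hKL : Module.finrank K L = 2) {χ : MulChar K ℂ} (hχ : χ.IsQuadratic) (hχ₁ : χ ≠ 1) {γ : L}
    (hγ : normLift L χ γ = -1) : IsTypeQ p (Fintype.card K) L (wilsonXiangSet χ γ) := by
  obtain ⟨Ψ, hΨ, hpsi⟩ := exists_psiL_eq_traceLift p K L
  have hsum : ∀ a b, psiSum p L a b (wilsonXiangSet χ γ) = ∑ u, ∑ v,
      (wilsonXiangSet χ γ).indicator 1 (u, v) * traceLift L Ψ (a * u + b * v) := fun a b ↦ by
    simp only [psiSum_eq_sum_indicator, hpsi]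
  refine ⟨?_, fun a b hab ↦ ?_⟩
  · have hcard := four_mul_sum_indicator_wilsonXiangSet_zero hKL hχ hχ₁ hΨ hγ
    rw [← hsum, psiSum_zero_zero, eq_sub_iff_add_eq] at hcard
    norm_cast at hcard
    lia
  · have h4 : (4 : ℂ) ≠ 0 := by norm_num
    rw [hsum, eq_div_iff h4, eq_div_iff h4, mul_comm _ 4]
    exact four_mul_sum_indicator_wilsonXiangSet_eq_or hKL hχ hχ₁ hΨ hγ hab

end TypeQ

section PrimitiveElement

variable {K L : Type} [Field L] {ω : L}

lemma quadratic_eq_neg_one_of_isPrim (hω : IsPrim L ω) {θ : MulChar L ℂ} (hθ : θ.IsQuadratic)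
    (hθ₁ : θ ≠ 1) : θ ω = -1 := by
  obtain ⟨z, hz⟩ := MulChar.ne_one_iff.1 hθ₁
  obtain ⟨n, hn⟩ := hω z z.ne_zero
  have hpow : θ ω ^ n ≠ 1 := by rwa [← map_pow, ← hn]
  rcases hθ ω with h | h | h
  · have hn₀ : n = 0 := by
      by_contra hn₀
      exact (z.isUnit.map θ).ne_zero (by rw [hn, map_pow, h, zero_pow hn₀])
    simp [hn₀] at hpow
  · simp [h] at hpow
  · exact h

lemma mem_cyc_two_iff_s14 (hω : IsPrim L ω) {θ : MulChar L ℂ} (hθ : θ ω = -1) {i : ℕ} (hi : i < 2)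
    {x : L} : x ∈ cyc L ω 2 i ↔ θ x = (-1) ^ i := by
  constructor
  · rintro ⟨k, rfl⟩
    simp [hθ]
  · intro h
    have hx : x ≠ 0 := by
      rintro rfl
      rw [MulChar.map_zero] at h
      exact pow_ne_zero i (neg_ne_zero.2 one_ne_zero) h.symm
    obtain ⟨n, rfl⟩ := hω x hx
    rw [map_pow, hθ] at h
    have hmod : n % 2 = i := by
      rw [neg_one_pow_eq_pow_mod_two] at h
      have hn := Nat.mod_lt n two_pos
      interval_cases i <;> interval_cases n % 2 <;> first | rfl | norm_num at h
    exact ⟨n / 2, by rw [← pow_mul, ← pow_add, ← hmod, Nat.mod_add_div]⟩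

lemma orderOf_eq_card_sub_one_of_isPrim [Fintype L] (hω : IsPrim L ω) (hω₀ : ω ≠ 0) :
    orderOf ω = Fintype.card L - 1 := by
  classical
  rw [← Units.val_mk0 hω₀, orderOf_units, orderOf_eq_card_of_forall_mem_zpowers,
    Nat.card_eq_fintype_card, Fintype.card_units]
  intro x
  obtain ⟨n, hn⟩ := hω x x.ne_zero
  exact ⟨n, Units.ext (by simp [hn])⟩

/-- The exponents `i < n` for which `ω ^ i` belongs to `T`. -/
def indexSet (ω : L) (n : ℕ) (T : Set L) : Set ℕ := {i | i < n ∧ ω ^ i ∈ T}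

lemma indexSet_union (ω : L) (n : ℕ) (S T : Set L) :
    indexSet ω n S ∪ indexSet ω n T = indexSet ω n (S ∪ T) := by
  ext i
  simp only [indexSet, Set.mem_union, Set.mem_ofPred_eq, and_or_left]

variable [Field K] [Algebra K L] {χ : MulChar K ℂ}

lemma inter_eq_indexSet_squareTraceSet (hχ : ∀ x, x ∈ sqSet K ↔ χ x = 1) (ω : L) (n c : ℕ) :
    {i | i < n ∧ Algebra.trace K L (ω ^ i) ∈ sqSet K} ∩
      {i | i < n ∧ Algebra.trace K L (ω ^ (i + c)) ∈ sqSet K} =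
    indexSet ω n (squareTraceSet χ (ω ^ c)) := by
  ext i
  simp only [indexSet, squareTraceSet, hχ, Set.mem_inter_iff, Set.mem_ofPred_eq, ← pow_add,
    add_comm c]
  tauto

lemma union_inter_eq_indexSet_mixedTraceSet (hχ : ∀ x, x ∈ sqSet K ↔ χ x = 1) (ω : L) (n c : ℕ) :
    {i | i < n ∧ Algebra.trace K L (ω ^ i) = 0} ∩
        {i | i < n ∧ Algebra.trace K L (ω ^ (i + c)) ∈ sqSet K} ∪
      {i | i < n ∧ Algebra.trace K L (ω ^ i) ∈ sqSet K} ∩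
        {i | i < n ∧ Algebra.trace K L (ω ^ (i + c)) = 0} =
    indexSet ω n (mixedTraceSet χ (ω ^ c)) := by
  ext i
  simp only [indexSet, mixedTraceSet, hχ, Set.mem_inter_iff, Set.mem_union, Set.mem_ofPred_eq,
    ← pow_add, add_comm c]
  tauto

variable [Fintype K] [Finite L]

lemma exists_eq_sq_smul_pow (hKL : Module.finrank K L = 2) (hω : IsPrim L ω) (hω₀ : ω ≠ 0)
    {t : L} (ht : t ≠ 0) :
    ∃ i < 2 * Fintype.card K + 2, ∃ x : K, x ≠ 0 ∧ t = x ^ 2 • ω ^ i := by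
  obtain ⟨n, rfl⟩ := hω t ht
  set N := 2 * Fintype.card K + 2 with hN
  have hnorm : algebraMap K L (Algebra.norm K ω ^ 2) = ω ^ N := by
    rw [map_pow, algebraMap_norm_eq_mul_frobenius hKL, FiniteField.coe_frobeniusAlgHom, hN]
    ring
  refine ⟨n % N, Nat.mod_lt n (by lia), Algebra.norm K ω ^ (n / N),
    pow_ne_zero _ (Algebra.norm_ne_zero_iff.2 hω₀), ?_⟩
  rw [Algebra.smul_def, ← pow_mul, mul_comm (n / N), pow_mul, map_pow, hnorm, ← pow_mul, ← pow_add,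
    Nat.div_add_mod]

lemma eq_of_pow_eq_sq_smul_pow (hKL : Module.finrank K L = 2) (hK : Odd (Fintype.card K))
    (hω : IsPrim L ω) (hω₀ : ω ≠ 0) {i j : ℕ} (hi : i < 2 * Fintype.card K + 2)
    (hj : j < 2 * Fintype.card K + 2) {x : K} (hx : x ≠ 0) (hij : ω ^ i = x ^ 2 • ω ^ j) :
    i = j := by
  obtain ⟨k, hk⟩ := hK
  have hk₀ : 0 < k := by
    have := Fintype.one_lt_card (α := K)
    lia
  have hpow : ω ^ (i * k) = ω ^ (j * k) := by
    rw [pow_mul, hij, smul_pow, ← pow_mul, ← pow_mul,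
      show 2 * k = Fintype.card K - 1 by lia, FiniteField.pow_card_sub_one_eq_one x hx, one_smul]
  have horder : orderOf ω = (2 * Fintype.card K + 2) * k := by
    cases nonempty_fintype L
    rw [orderOf_eq_card_sub_one_of_isPrim hω hω₀, Module.card_eq_pow_finrank (K := K), hKL, hk,
      Nat.sub_eq_iff_eq_add (Nat.one_le_pow _ _ (by lia))]
    ring
  refine Nat.eq_of_mul_eq_mul_right hk₀ (pow_injOn_Iio_orderOf ?_ ?_ hpow) <;>
    rw [horder] <;> exact Nat.mul_lt_mul_of_pos_right ‹_› hk₀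

lemma ncard_indexSet_trace_le_one (hKL : Module.finrank K L = 2) (hK : Odd (Fintype.card K))
    (hχ : ∀ x, x ∈ sqSet K ↔ χ x = 1) (hω : IsPrim L ω) (hω₀ : ω ≠ 0) {α : L} (hα : α ≠ 0)
    (β : L) :
    (indexSet ω (2 * Fintype.card K + 2) {t | Algebra.trace K L (α * t) = 0 ∧
      χ (Algebra.trace K L (β * t)) = 1}).ncard ≤ 1 := by
  rw [Set.ncard_le_one ((Set.finite_lt_nat _).subset fun i hi ↦ hi.1)]
  rintro i ⟨hi, hi₀, hi₁⟩ j ⟨hj, hj₀, hj₁⟩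
  obtain ⟨x, hx⟩ := exists_smul_eq_of_trace_eq_zero hKL
    (mul_ne_zero hα (pow_ne_zero j hω₀)) hj₀ hi₀
  rw [← mul_smul_comm, mul_right_inj' hα] at hx
  rw [← hx, mul_smul_comm, map_smul, smul_eq_mul, map_mul, hj₁, mul_one, ← hχ] at hi₁
  obtain ⟨y, hy, rfl⟩ := hi₁
  exact eq_of_pow_eq_sq_smul_pow hKL hK hω hω₀ hi hj hy hx.symm

lemma ncard_indexSet_mixedTraceSet_le_two (hKL : Module.finrank K L = 2)
    (hK : Odd (Fintype.card K)) (hχ : ∀ x, x ∈ sqSet K ↔ χ x = 1) (hω : IsPrim L ω) (hω₀ : ω ≠ 0)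
    {γ : L} (hγ : γ ≠ 0) :
    (indexSet ω (2 * Fintype.card K + 2) (mixedTraceSet χ γ)).ncard ≤ 2 := by
  have h₁ := ncard_indexSet_trace_le_one hKL hK hχ hω hω₀ one_ne_zero γ
  have h₂ := ncard_indexSet_trace_le_one hKL hK hχ hω hω₀ hγ 1
  have hunion : indexSet ω (2 * Fintype.card K + 2) (mixedTraceSet χ γ) =
      indexSet ω (2 * Fintype.card K + 2) {t | Algebra.trace K L (1 * t) = 0 ∧
        χ (Algebra.trace K L (γ * t)) = 1} ∪
      indexSet ω (2 * Fintype.card K + 2) {t | Algebra.trace K L (γ * t) = 0 ∧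
        χ (Algebra.trace K L (1 * t)) = 1} := by
    ext i
    simp only [indexSet, mixedTraceSet, Set.mem_union, Set.mem_ofPred_eq, one_mul, ← and_or_left,
      and_comm]
  rw [hunion]
  exact (Set.ncard_union_le _ _).trans (add_le_add h₁ h₂)

lemma setOf_indexSet_eq (hKL : Module.finrank K L = 2) (hω : IsPrim L ω) (hω₀ : ω ≠ 0)
    (hχ : χ.IsQuadratic) {T : Set L} (hT : IsSquareStable K T) (hT₀ : 0 ∉ T) {C : Set L} {e : ℂ}
    (hC : ∀ u, u ∈ C ↔ normLift L χ u = e) (he : e ≠ 0) :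
    {w | ∃ x : K, x ≠ 0 ∧ ∃ y ∈ C, ∃ i ∈ indexSet ω (2 * Fintype.card K + 2) T,
      w = (algebraMap K L x * y, algebraMap K L x * y⁻¹ * ω ^ i)} =
    {w | normLift L χ w.1 = e ∧ w.1 * w.2 ∈ T} := by
  ext ⟨u, v⟩
  constructor
  · rintro ⟨x, hx, y, hy, i, ⟨-, hi⟩, hw⟩
    obtain ⟨rfl, rfl⟩ := Prod.ext_iff.1 hw
    rw [hC] at hy
    have hy₀ : y ≠ 0 := by
      rintro rfl
      exact he (hy ▸ MulChar.map_zero _)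
    refine ⟨?_, ?_⟩
    · rw [← Algebra.smul_def, normLift_smul hχ (hKL ▸ even_two) hx, hy]
    · convert hT hx hi using 1
      rw [Algebra.smul_def, map_pow]
      field_simp
  · rintro ⟨hu, huv⟩
    dsimp only at hu huv
    obtain ⟨i, hi, x, hx, hxi⟩ := exists_eq_sq_smul_pow hKL hω hω₀ (ne_of_mem_of_not_mem huv hT₀)
    have hx' : algebraMap K L x ≠ 0 := by simpa
    have hu₀ : u ≠ 0 := by
      rintro rfl
      exact hT₀ (by simpa using huv)
    refine ⟨x, hx, x⁻¹ • u, (hC _).2 ?_, i, ⟨hi, ?_⟩, ?_⟩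
    · rw [normLift_smul hχ (hKL ▸ even_two) (inv_ne_zero hx), hu]
    · convert hT (inv_ne_zero hx) huv using 1
      rw [hxi, inv_pow, inv_smul_smul₀ (pow_ne_zero 2 hx)]
    · rw [Algebra.smul_def, map_pow] at hxi
      rw [Algebra.smul_def, map_inv₀, Prod.mk.injEq]
      refine ⟨(mul_inv_cancel_left₀ hx' u).symm, mul_left_cancel₀ hu₀ ?_⟩
      rw [hxi]
      field_simp

lemma union_eq_wilsonXiangSet (hKL : Module.finrank K L = 2) (hχ : χ.IsQuadratic)
    (hω : IsPrim L ω) (hη : normLift L χ ω = -1) (γ : L) :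
    {w | ∃ y ∈ cyc L ω 2 0, w = (y, 0)} ∪
      {w | ∃ x : K, x ≠ 0 ∧ ∃ y ∈ cyc L ω 2 0, ∃ i ∈ indexSet ω (2 * Fintype.card K + 2)
        (mixedTraceSet χ γ ∪ squareTraceSet χ γ),
        w = (algebraMap K L x * y, algebraMap K L x * y⁻¹ * ω ^ i)} ∪
      {w | ∃ x : K, x ≠ 0 ∧ ∃ y ∈ cyc L ω 2 1, ∃ i ∈ indexSet ω (2 * Fintype.card K + 2)
        (squareTraceSet χ γ),
        w = (algebraMap K L x * y, algebraMap K L x * y⁻¹ * ω ^ i)} =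
    wilsonXiangSet χ γ := by
  have hω₀ := ne_zero_of_mulChar_eq_neg_one hη
  have hsq := isSquareStable_squareTraceSet hχ γ
  have hmix : IsSquareStable K (mixedTraceSet χ γ ∪ squareTraceSet χ γ) := fun x t hx ↦
    Or.imp (isSquareStable_mixedTraceSet hχ γ hx) (hsq hx)
  have hsq₀ : 0 ∉ squareTraceSet χ γ := zero_notMem_squareTraceSet γ
  have hmix₀ : 0 ∉ mixedTraceSet χ γ ∪ squareTraceSet χ γ := fun h ↦
    h.elim (zero_notMem_mixedTraceSet γ) hsq₀
  have hcyc₀ : ∀ u, u ∈ cyc L ω 2 0 ↔ normLift L χ u = 1 := fun u ↦ by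
    rw [mem_cyc_two_iff_s14 hω hη two_pos, pow_zero]
  have hcyc₁ : ∀ u, u ∈ cyc L ω 2 1 ↔ normLift L χ u = -1 := fun u ↦ by
    rw [mem_cyc_two_iff_s14 hω hη one_lt_two, pow_one]
  rw [setOf_indexSet_eq hKL hω hω₀ hχ hmix hmix₀ hcyc₀ one_ne_zero,
    setOf_indexSet_eq hKL hω hω₀ hχ hsq hsq₀ hcyc₁ (neg_ne_zero.2 one_ne_zero)]
  ext ⟨u, v⟩
  simp only [wilsonXiangSet, hcyc₀, Set.mem_union, Set.mem_ofPred_eq, Prod.mk.injEq]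
  grind

end PrimitiveElement

lemma eq_union_and_eq_of_ncard_eq_add_two {α : Type*} {A B X₁ X₃ : Set α} (hA : A.Finite)
    (hB : B.Finite) (hinter : A ∩ B = X₃) (hsymm : A \ B ∪ B \ A = X₁)
    (hcard : A.ncard = B.ncard + 2) (hX₁ : X₁.ncard ≤ 2) : A = X₁ ∪ X₃ ∧ B = X₃ := by
  have hAB := Set.ncard_inter_add_ncard_sdiff_eq_ncard A B hA
  have hBA := Set.ncard_inter_add_ncard_sdiff_eq_ncard B A hB
  have hunion : (A \ B ∪ B \ A).ncard = (A \ B).ncard + (B \ A).ncard :=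
    Set.ncard_union_eq disjoint_sdiff_sdiff hA.sdiff hB.sdiff
  have hdiff : B \ A = ∅ := by
    rw [Set.inter_comm] at hBA
    rw [← Set.ncard_eq_zero hB.sdiff]
    lia
  subst hinter hsymm
  rw [hdiff, Set.union_empty, Set.sdiff_union_inter, eq_comm (a := B), Set.inter_eq_right]
  exact ⟨rfl, Set.sdiff_eq_empty.1 hdiff⟩

end WilsonXiang

/-- Theorem 4.1(2): `E₁ = D₁ ∪ D₂ ∪ D₃` is of type Q. -/
theorem wilson_xiang_E1_typeQ
    (p s q : ℕ) (hp : p.Prime) (hpodd : p ≠ 2) (hs : 0 < s) (hq : q = p ^ s)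
    (K L : Type) [Field K] [Fintype K] [Field L] [Fintype L] [Algebra K L] [CharP L p]
    (hK : Fintype.card K = q) (hL : Fintype.card L = q ^ 2)
    (ω : L) (hω : IsPrim L ω)
    (c : ℕ) (hc : c < 2 * q + 2) (hcodd : Odd c)
    (I₁ I₂ J₁ J₂ : Set ℕ)
    (hI₁ : I₁ = {i | i < 2 * q + 2 ∧ Algebra.trace K L (ω ^ i) = 0})
    (hI₂ : I₂ = {i | i < 2 * q + 2 ∧ Algebra.trace K L (ω ^ i) ∈ sqSet K})
    (hJ₁ : J₁ = {i | i < 2 * q + 2 ∧ Algebra.trace K L (ω ^ (i + c)) = 0})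
    (hJ₂ : J₂ = {i | i < 2 * q + 2 ∧ Algebra.trace K L (ω ^ (i + c)) ∈ sqSet K})
    (X₁c X₃c : Set ℕ)
    (hX₁c : X₁c = (I₁ ∩ J₂) ∪ (I₂ ∩ J₁)) (hX₃c : X₃c = I₂ ∩ J₂)
    (τ : ℕ) (hτ : τ = if q % 4 = 3 then 0 else 1)
    (A B : Set ℕ) (hA : ∀ i ∈ A, i < 2 * q + 2) (hB : ∀ i ∈ B, i < 2 * q + 2)
    (hAB : A ∩ B = X₃c) (hABsym : (A \ B) ∪ (B \ A) = X₁c)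
    (D₀ D₁ D₂ D₃ : Set (L × L))
    (hD₀ : D₀ = {w | ∃ y ∈ cyc L ω 2 τ, w = ((0 : L), y)})
    (hD₁ : D₁ = {w | ∃ y ∈ cyc L ω 2 0, w = (y, (0 : L))})
    (hD₂ : D₂ = {w | ∃ x : K, x ≠ 0 ∧ ∃ y ∈ cyc L ω 2 0, ∃ i ∈ A,
      w = (algebraMap K L x * y, algebraMap K L x * y⁻¹ * ω ^ i)})
    (hD₃ : D₃ = {w | ∃ x : K, x ≠ 0 ∧ ∃ y ∈ cyc L ω 2 1, ∃ i ∈ B,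
      w = (algebraMap K L x * y, algebraMap K L x * y⁻¹ * ω ^ i)})
    (hcardA : A.ncard = (q + 3) / 2) (hcardB : B.ncard = (q - 1) / 2)
    (hpar : (A ∩ {i | Even i}).ncard + (B ∩ {i | Odd i}).ncard =
      (A ∩ {i | Odd i}).ncard + (B ∩ {i | Even i}).ncard)
    : IsTypeQ p q L (D₁ ∪ D₂ ∪ D₃) := by
  have : Fact p.Prime := ⟨hp⟩
  subst hK hX₁c hX₃c hI₁ hI₂ hJ₁ hJ₂ hD₁ hD₂ hD₃
  have hodd : Odd (Fintype.card K) := hq ▸ (hp.odd_of_ne_two hpodd).pow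
  have hKL : Module.finrank K L = 2 := Nat.pow_right_injective Fintype.one_lt_card <|
    Module.card_eq_pow_finrank.symm.trans hL
  have hchar : ringChar K ≠ 2 := fun h ↦
    Nat.not_even_iff_odd.2 hodd (Nat.even_iff.2 (FiniteField.even_card_iff_char_two.1 h))
  obtain ⟨χ, hχ, hχ₁, hsq⟩ := WilsonXiang.exists_quadratic_eq_one_iff_mem_sqSet hchar
  have hη := WilsonXiang.quadratic_eq_neg_one_of_isPrim hω
    (WilsonXiang.normLift_isQuadratic (L := L) hχ) (WilsonXiang.normLift_ne_one hχ₁)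
  have hγ : WilsonXiang.normLift L χ (ω ^ c) = -1 := by rw [map_pow, hη, hcodd.neg_one_pow]
  have hω₀ := WilsonXiang.ne_zero_of_mulChar_eq_neg_one hη
  have hcard : A.ncard = B.ncard + 2 := by
    rw [hcardA, hcardB]
    have := Nat.odd_iff.1 hodd
    lia
  rw [WilsonXiang.union_inter_eq_indexSet_mixedTraceSet hsq] at hABsym
  rw [WilsonXiang.inter_eq_indexSet_squareTraceSet hsq] at hAB
  obtain ⟨rfl, rfl⟩ := WilsonXiang.eq_union_and_eq_of_ncard_eq_add_two
    ((Set.finite_lt_nat _).subset hA) ((Set.finite_lt_nat _).subset hB) hAB hABsym hcard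
    (WilsonXiang.ncard_indexSet_mixedTraceSet_le_two hKL hodd hsq hω hω₀ (pow_ne_zero c hω₀))
  rw [WilsonXiang.indexSet_union, WilsonXiang.union_eq_wilsonXiangSet hKL hχ hω hη]
  exact WilsonXiang.isTypeQ_wilsonXiangSet p hKL hχ hχ₁ hγ

end
end
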